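/- arXiv:1401.6090 — 2 statements merged into one kernel-verified Lean document; each statement's English description precedes it below -/
import Mathlib

section
/- Let 0 < λ₁ < λ₂ < ⋯ < λₙ be distinct positive reals and let x⁰, y⁰ ∈ ℂⁿ satisfy k_λ(t, y⁰) ≤ k_λ(t, x⁰) for all t > 0. Then there exists a matrix T ∈ Mₙ(ℂ) such that T x⁰ = y⁰ and k_λ(t, T x) ≤ k_λ(t, x) for all x ∈ ℂⁿ and all t > 0; equivalently, T x⁰ = y⁰ and T is simultaneously a contraction for the norm ‖x‖₀² = ∑ᵢ|xᵢ|² and for the norm ‖x‖₁² = ∑ᵢ λᵢ|xᵢ|². -/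
/-!
Put `pᵢ = -λᵢ` and `wᵢ = λᵢ (|x₀ᵢ|² - |y₀ᵢ|²)`. The hypothesis says that the rational function
`G(t) = ∑ᵢ wᵢ / (t - pᵢ)` is nonnegative for `t > 0`. On functions `f` on the nodes consider the
indefinite forms `Q_t(f) = ∑ᵢ wᵢ |f(pᵢ)|² / (t - pᵢ)`; the function `1` has `Q_t(1) = G(t) ≥ 0`. The
operator `T` comes from a linear map sending the values of `f` at the nodes of positive weight to
its values at the nodes of negative weight, that is, from a maximal subspace containing `1` on which
all `Q_t`, `t > 0`, are nonnegative.

Such a subspace is found by factoring the numerator of `G` on the real line as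
`c ∏_{a ∈ A} (t - a) |D(t)|²` with distinct `a ≤ 0` (`exists_factor`, `roots_nonpos`). Let `B ⊆ A`
and `f = g / (D ∏_{r ∈ B} (t - r))`. Then `|f|² G` has only simple poles, at the nodes with residue
`wᵢ |f(pᵢ)|²` and at `r ∈ B` with a residue whose sign does not depend on `f`. Choosing for `B` the
points where this sign is `≤ 0` gives `Q_t(f) ≥ |f(t)|² G(t) ≥ 0` (`Factored.form_nonneg`). The
complementary choice gives functions with `∑ᵢ wᵢ |f(pᵢ)|² ≤ 0` (`Factored.form_nonpos`). The
dimensions of the two spaces add up to the number of nodes, so both are maximal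
(`Factored.exists_map`).

This needs all `wᵢ ≠ 0` and `∑ᵢ wᵢ > 0`. Both hold once the moduli of the coordinates of `x₀` are
slightly increased, and exact contractions form a compact set, so a limit gives the general case.
-/

/-! ### Rational functions on the real line -/

section

open Polynomial

/-- On the real line, the squared modulus of a complex polynomial is a real polynomial. -/
lemma exists_normSq_poly (g : ℂ[X]) : ∃ R : ℝ[X], R.natDegree ≤ 2 * g.natDegree ∧
    ∀ t : ℝ, R.eval t = ‖g.eval (t : ℂ)‖ ^ 2 := by
  let U : ℝ[X] := ∑ k ∈ Finset.range (g.natDegree + 1), C (g.coeff k).re * X ^ k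
  let V : ℝ[X] := ∑ k ∈ Finset.range (g.natDegree + 1), C (g.coeff k).im * X ^ k
  have hU : U.natDegree ≤ g.natDegree := by
    refine natDegree_sum_le_of_forall_le _ _ fun k hk => ?_
    have := Finset.mem_range.1 hk
    exact (natDegree_C_mul_X_pow_le _ _).trans (by omega)
  have hV : V.natDegree ≤ g.natDegree := by
    refine natDegree_sum_le_of_forall_le _ _ fun k hk => ?_
    have := Finset.mem_range.1 hk
    exact (natDegree_C_mul_X_pow_le _ _).trans (by omega)
  refine ⟨U ^ 2 + V ^ 2, ?_, fun t => ?_⟩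
  · refine (natDegree_add_le _ _).trans (max_le ?_ ?_)
    · exact natDegree_pow_le.trans (by gcongr)
    · exact natDegree_pow_le.trans (by gcongr)
  · have h : g.eval (t : ℂ) = ((U.eval t : ℝ) : ℂ) + ((V.eval t : ℝ) : ℂ) * Complex.I := by
      rw [eval_eq_sum_range]
      simp only [U, V, eval_finsetSum, eval_mul, eval_C, eval_pow, eval_X]
      push_cast
      rw [Finset.sum_mul, ← Finset.sum_add_distrib]
      refine Finset.sum_congr rfl fun k _ => ?_
      conv_lhs => rw [← Complex.re_add_im (g.coeff k)]
      ring
    rw [h, ← Complex.normSq_eq_norm_sq, Complex.normSq_add_mul_I]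
    simp

/-- Every nonzero real polynomial agrees on the real line with `c · ∏ₐ (t - a) · |D(t)|²`, the `a`
being its distinct real roots of odd multiplicity. The polynomial `D` takes one root of each complex
conjugate pair, and each real root with half its (rounded down) multiplicity. -/
lemma exists_factor (d : ℕ) : ∀ P : ℝ[X], P ≠ 0 → P.natDegree = d →
    ∃ (A : Finset ℝ) (D : ℂ[X]), D ≠ 0 ∧ d = A.card + 2 * D.natDegree ∧
      ∀ t : ℝ, P.eval t = P.leadingCoeff * (∏ r ∈ A, (t - r)) * ‖D.eval (t : ℂ)‖ ^ 2 := by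
  induction d using Nat.strong_induction_on with
  | _ d ih =>
  intro P hP hd
  rcases Nat.eq_zero_or_pos d with h0 | hdpos
  · refine ⟨∅, 1, one_ne_zero, by simp [h0], fun t => ?_⟩
    rw [eq_C_of_natDegree_eq_zero (hd.trans h0)]
    simp
  obtain ⟨z, hz⟩ := Complex.exists_root (f := P.map (algebraMap ℝ ℂ)) (by
    rw [degree_map]; exact natDegree_pos_iff_degree_pos.1 (hd ▸ hdpos))
  have hz' : aeval z P = 0 := by rwa [IsRoot, eval_map_algebraMap] at hz
  by_cases him : z.im = 0
  · -- real root
    have hzr : P.IsRoot z.re := by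
      have : z = (z.re : ℂ) := by apply Complex.ext <;> simp [him]
      rw [this] at hz'
      have h2 : aeval ((algebraMap ℝ ℂ) z.re) P = 0 := hz'
      rw [aeval_algebraMap_apply] at h2
      simpa using h2
    obtain ⟨P₁, rfl⟩ := dvd_iff_isRoot.2 hzr
    have hP₁ : P₁ ≠ 0 := right_ne_zero_of_mul hP
    have hdeg : P₁.natDegree + 1 = d := by
      rw [natDegree_mul (X_sub_C_ne_zero _) hP₁, natDegree_X_sub_C] at hd; omega
    obtain ⟨A, D, hD, hcard, hev⟩ := ih P₁.natDegree (by omega) P₁ hP₁ rfl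
    by_cases hmem : z.re ∈ A
    · refine ⟨A.erase z.re, (X - C (z.re : ℂ)) * D, mul_ne_zero (X_sub_C_ne_zero _) hD, ?_,
        fun t => ?_⟩
      · have := Finset.card_erase_add_one hmem
        rw [natDegree_mul (X_sub_C_ne_zero _) hD, natDegree_X_sub_C]
        omega
      · have h1 := Finset.mul_prod_erase A (fun r => t - r) hmem
        simp only [leadingCoeff_mul, leadingCoeff_X_sub_C, eval_mul, eval_sub, eval_X, eval_C, hev,
          norm_mul, mul_pow]
        rw [← Complex.ofReal_sub, Complex.norm_real, Real.norm_eq_abs, sq_abs, ← h1]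
        ring
    · refine ⟨insert z.re A, D, hD, ?_, fun t => ?_⟩
      · rw [Finset.card_insert_of_notMem hmem]; omega
      · simp only [leadingCoeff_mul, leadingCoeff_X_sub_C, eval_mul, eval_sub, eval_X, eval_C, hev,
          Finset.prod_insert hmem]
        ring
  · obtain ⟨P₁, rfl⟩ := P.quadratic_dvd_of_aeval_eq_zero_im_ne_zero hz' him
    have hP₁ : P₁ ≠ 0 := right_ne_zero_of_mul hP
    have hq : (X ^ 2 - C (2 * z.re) * X + C (‖z‖ ^ 2) : ℝ[X]).natDegree = 2 := by
      compute_degree!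
    have hqm : (X ^ 2 - C (2 * z.re) * X + C (‖z‖ ^ 2) : ℝ[X]).leadingCoeff = 1 := by
      rw [leadingCoeff, hq]; simp [-map_pow]
    have hdeg : P₁.natDegree + 2 = d := by
      rw [natDegree_mul (left_ne_zero_of_mul hP) hP₁, hq] at hd; omega
    obtain ⟨A, D, hD, hcard, hev⟩ := ih P₁.natDegree (by omega) P₁ hP₁ rfl
    refine ⟨A, (X - C z) * D, mul_ne_zero (X_sub_C_ne_zero _) hD, ?_, fun t => ?_⟩
    · rw [natDegree_mul (X_sub_C_ne_zero _) hD, natDegree_X_sub_C]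
      omega
    · rw [leadingCoeff_mul, hqm]
      simp only [eval_mul, eval_sub, eval_add, eval_pow, eval_X, eval_C, hev,
          norm_mul, mul_pow]
      have : ‖(t : ℂ) - z‖ ^ 2 = t ^ 2 - 2 * z.re * t + ‖z‖ ^ 2 := by
        rw [← Complex.normSq_eq_norm_sq, ← Complex.normSq_eq_norm_sq, Complex.normSq_apply,
          Complex.normSq_apply]
        simp; ring
      rw [this]; ring

/-- Partial fractions for a numerator `N` over a denominator with the simple zeros `pᵢ` and
`r ∈ B`. -/
lemma partial_fractions {ι : Type*} [Fintype ι] [DecidableEq ι] {p : ι → ℝ}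
    (hp : Function.Injective p) {B : Finset ℝ} (hB : ∀ i, p i ∉ B) {N : ℝ[X]}
    (hN : N.natDegree < Fintype.card ι + B.card) {t : ℝ} (ht : ∀ i, t ≠ p i) (htB : t ∉ B) :
    N.eval t / ((∏ i, (t - p i)) * ∏ r ∈ B, (t - r)) =
      ∑ i, N.eval (p i) /
          ((∏ j ∈ Finset.univ.erase i, (p i - p j)) * ∏ r ∈ B, (p i - r)) / (t - p i) +
        ∑ r ∈ B, N.eval r /
          ((∏ i, (r - p i)) * ∏ s ∈ B.erase r, (r - s)) / (t - r) := by
  let v : ι ⊕ B → ℝ := Sum.elim p Subtype.val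
  have hv : Function.Injective v := by
    refine hp.sumElim Subtype.val_injective fun i b h => hB i (h ▸ b.2)
  have hdeg : N.degree < (Finset.univ : Finset (ι ⊕ B)).card := by
    refine lt_of_le_of_lt degree_le_natDegree ?_
    have : N.natDegree < (Finset.univ : Finset (ι ⊕ B)).card := by simpa using hN
    exact_mod_cast this
  have hint := Lagrange.eq_interpolate (hv.injOn) hdeg
  have htv : ∀ i ∈ (Finset.univ : Finset (ι ⊕ B)), t ≠ v i := by
    rintro (i | b) -
    · exact ht i
    · exact fun h => htB (h ▸ b.2)
  have hev := Lagrange.eval_interpolate_not_at_node (fun i => N.eval (v i)) htv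
  rw [← hint] at hev
  have hnod : Lagrange.nodal Finset.univ v
      = Lagrange.nodal Finset.univ p * Lagrange.nodal B (id : ℝ → ℝ) := by
    simp only [Lagrange.nodal, Fintype.prod_sum_type, v, Sum.elim_inl, Sum.elim_inr, id]
    rw [Finset.prod_coe_sort B (fun r : ℝ => X - C r)]
  have hL0 : (∏ i, (t - p i)) ≠ 0 := Finset.prod_ne_zero_iff.2 fun i _ => sub_ne_zero.2 (ht i)
  have hB0 : (∏ r ∈ B, (t - r)) ≠ 0 :=
    Finset.prod_ne_zero_iff.2 fun r hr => sub_ne_zero.2 fun h => htB (h ▸ hr)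
  have hnt : (Lagrange.nodal Finset.univ v).eval t = (∏ i, (t - p i)) * ∏ r ∈ B, (t - r) := by
    simp [hnod, Lagrange.eval_nodal]
  have hwl : ∀ i, Lagrange.nodalWeight Finset.univ v (Sum.inl i) =
      ((∏ j ∈ Finset.univ.erase i, (p i - p j)) * ∏ r ∈ B, (p i - r))⁻¹ := by
    intro i
    rw [Lagrange.nodalWeight_eq_eval_derivative_nodal (Finset.mem_univ _), hnod, derivative_mul]
    have h1 : eval (p i) (Lagrange.nodal Finset.univ p) = 0 :=
      Lagrange.eval_nodal_at_node (Finset.mem_univ i)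
    simp only [v, Sum.elim_inl, eval_add, eval_mul, h1,
      Lagrange.eval_nodal_derivative_eval_node_eq (Finset.mem_univ i), Lagrange.eval_nodal]
    simp
  have hwr : ∀ r : B, Lagrange.nodalWeight Finset.univ v (Sum.inr r) =
      ((∏ i, ((r : ℝ) - p i)) * ∏ s ∈ B.erase r, ((r : ℝ) - s))⁻¹ := by
    intro r
    rw [Lagrange.nodalWeight_eq_eval_derivative_nodal (Finset.mem_univ _), hnod, derivative_mul]
    have h1 : eval (r : ℝ) (Lagrange.nodal B (id : ℝ → ℝ)) = 0 :=
      Lagrange.eval_nodal_at_node (v := (id : ℝ → ℝ)) r.2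
    have h2 : eval (r : ℝ) (derivative (Lagrange.nodal B (id : ℝ → ℝ))) = _ :=
      Lagrange.eval_nodal_derivative_eval_node_eq (v := (id : ℝ → ℝ)) r.2
    simp only [v, Sum.elim_inr, eval_add, eval_mul, h1, h2, Lagrange.eval_nodal]
    simp
  rw [hev, hnt, mul_div_cancel_left₀ _ (mul_ne_zero hL0 hB0), Fintype.sum_sum_type]
  simp only [hwl, hwr, v, Sum.elim_inl, Sum.elim_inr]
  rw [← Finset.sum_coe_sort B]
  congr 1 <;> refine Finset.sum_congr rfl fun i _ => ?_ <;> ring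

/-- The residues of a rational function that is `O(t⁻²)` at infinity add up to zero: compare the
partial fractions of `N` and of `X * N`. -/
lemma sum_residues {ι : Type*} [Fintype ι] [DecidableEq ι] {p : ι → ℝ}
    (hp : Function.Injective p) {B : Finset ℝ} (hB : ∀ i, p i ∉ B) {N : ℝ[X]}
    (hN : N.natDegree + 1 < Fintype.card ι + B.card) :
    ∑ i, N.eval (p i) /
          ((∏ j ∈ Finset.univ.erase i, (p i - p j)) * ∏ r ∈ B, (p i - r)) +
        ∑ r ∈ B, N.eval r /
          ((∏ i, (r - p i)) * ∏ s ∈ B.erase r, (r - s)) = 0 := by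
  obtain ⟨t, ht⟩ := Infinite.exists_notMem_finset (Finset.univ.image p ∪ B)
  have htp : ∀ i, t ≠ p i := fun i h => ht (by simp [h])
  have htB : t ∉ B := fun h => ht (by simp [h])
  have h1 := partial_fractions hp hB (N := N) (by omega) htp htB
  have h2 := partial_fractions hp hB (N := X * N)
    (lt_of_le_of_lt natDegree_mul_le (by rw [natDegree_X]; omega)) htp htB
  have h3 : ∀ a b s : ℝ, t ≠ s → a / b = t * (a / b / (t - s)) - s * a / b / (t - s) := by
    intro a b s hs
    have := sub_ne_zero.2 hs
    rw [mul_div_assoc s, mul_div_assoc s, ← sub_mul, mul_div_cancel₀ _ this]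
  rw [Finset.sum_congr rfl fun i _ => h3 _ _ _ (htp i),
    Finset.sum_congr rfl fun r hr => h3 _ _ r (fun h => htB (h ▸ hr)),
    Finset.sum_sub_distrib, Finset.sum_sub_distrib, ← Finset.mul_sum, ← Finset.mul_sum]
  simp only [eval_mul, eval_X] at h2
  rw [mul_div_assoc, h1] at h2
  linarith

/-- A function that is nonnegative on `(0, ∞)` has no sign change there, so its real roots of odd
multiplicity are `≤ 0`. -/
lemma roots_nonpos {c : ℝ} (hc : c ≠ 0) {A : Finset ℝ} {D : ℂ[X]} (hD : D ≠ 0)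
    (h : ∀ t : ℝ, 0 < t → 0 ≤ c * (∏ r ∈ A, (t - r)) * ‖D.eval (t : ℂ)‖ ^ 2) :
    ∀ r ∈ A, r ≤ 0 := by
  intro r hr
  by_contra! hr0
  let q : ℝ → ℝ := fun t => c * ∏ s ∈ A.erase r, (t - s)
  have hq : Continuous q := by fun_prop
  have hqr : q r ≠ 0 := mul_ne_zero hc <| Finset.prod_ne_zero_iff.2 fun s hs =>
    sub_ne_zero.2 (Finset.ne_of_mem_erase hs).symm
  have e1 : ∀ᶠ t in nhds r, 0 < q t * q r :=
    (hq.mul continuous_const).continuousAt.eventually_const_lt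
      (mul_self_pos.2 hqr)
  have e2 : ∀ᶠ t in nhds r, 0 < t := eventually_gt_nhds hr0
  have e3 : ∀ᶠ t : ℝ in nhdsWithin r ({r}ᶜ : Set ℝ), D.eval (t : ℂ) ≠ 0 := by
    have hfin : {t : ℝ | D.eval (t : ℂ) = 0}.Finite := by
      refine ((D.roots.toFinset.finite_toSet).preimage
        (f := ((↑) : ℝ → ℂ)) Complex.ofReal_injective.injOn).subset fun t ht => ?_
      simpa [hD] using ht
    have := (hfin.subset (Set.sdiff_subset (t := {r}))).isClosed.compl_mem_nhds (x := r) (by simp)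
    filter_upwards [nhdsWithin_le_nhds this, self_mem_nhdsWithin] with t ht htr h0
    exact ht ⟨h0, htr⟩
  have key : ∀ t : ℝ, 0 < t → D.eval (t : ℂ) ≠ 0 → 0 ≤ (t - r) * q t := by
    intro t ht hDt
    have h1 := h t ht
    rw [← Finset.mul_prod_erase A _ hr] at h1
    have h2 : 0 < ‖D.eval (t : ℂ)‖ ^ 2 := by positivity
    have := nonneg_of_mul_nonneg_left h1 h2
    simp only [q]; linarith
  have eR : ∀ᶠ t in nhdsWithin r (Set.Ioi r), 0 < q t * q r ∧ 0 < t ∧ D.eval (t : ℂ) ≠ 0 :=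
    (Filter.Eventually.filter_mono nhdsWithin_le_nhds e1).and <|
      (Filter.Eventually.filter_mono nhdsWithin_le_nhds e2).and
      (nhdsWithin_mono r (fun x (hx : r < x) => hx.ne') e3)
  have eL : ∀ᶠ t in nhdsWithin r (Set.Iio r), 0 < q t * q r ∧ 0 < t ∧ D.eval (t : ℂ) ≠ 0 :=
    (Filter.Eventually.filter_mono nhdsWithin_le_nhds e1).and <|
      (Filter.Eventually.filter_mono nhdsWithin_le_nhds e2).and
      (nhdsWithin_mono r (fun x (hx : x < r) => hx.ne) e3)
  obtain ⟨t₁, ⟨a1, a2, a3⟩, (a4 : r < t₁)⟩ := (eR.and self_mem_nhdsWithin).exists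
  obtain ⟨t₂, ⟨b1, b2, b3⟩, (b4 : t₂ < r)⟩ := (eL.and self_mem_nhdsWithin).exists
  have k1 := key t₁ a2 a3
  have k2 := key t₂ b2 b3
  have k1' : 0 ≤ q t₁ := nonneg_of_mul_nonneg_right k1 (by linarith)
  have k2' : q t₂ ≤ 0 := by
    by_contra! hh
    have := mul_neg_of_neg_of_pos (sub_neg.2 b4) hh
    linarith
  rcases lt_or_gt_of_ne hqr with hn | hn
  · nlinarith
  · nlinarith

/-! ### Maximal nonnegative subspaces -/

section Krein

variable {ι : Type*}


/-- The values at the points `pᵢ` of the rational function `f = g / (D · ∏_{r ∈ B} (t - r))`, as a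
linear function of the numerator `g`. -/
noncomputable def evalMap (p : ι → ℝ) (D : ℂ[X]) (B : Finset ℝ) : ℂ[X] →ₗ[ℂ] (ι → ℂ) :=
  LinearMap.pi fun i =>
    ((D.eval (p i : ℂ) * ((∏ r ∈ B, (p i - r) : ℝ) : ℂ))⁻¹) • Polynomial.leval (p i : ℂ)

lemma evalMap_apply (p : ι → ℝ) (D : ℂ[X]) (B : Finset ℝ) (g : ℂ[X]) (i : ι) :
    evalMap p D B g i =
      (D.eval (p i : ℂ) * ((∏ r ∈ B, (p i - r) : ℝ) : ℂ))⁻¹ * g.eval (p i : ℂ) := by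
  simp [evalMap]

/-- The map `evalMap` on numerators of degree `< k`, keeping only the coordinates that satisfy
`s`. -/
noncomputable def evalOn (p : ι → ℝ) (D : ℂ[X]) (B : Finset ℝ) (k : ℕ) (s : ι → Prop) :
    degreeLT ℂ k →ₗ[ℂ] ({i // s i} → ℂ) :=
  LinearMap.funLeft ℂ ℂ Subtype.val ∘ₗ evalMap p D B ∘ₗ (degreeLT ℂ k).subtype

lemma finrank_degreeLT (k : ℕ) : Module.finrank ℂ (degreeLT ℂ k) = k := by
  rw [(degreeLTEquiv ℂ k).finrank_eq]; simp

lemma evalOn_injective (p : ι → ℝ) (D : ℂ[X]) (B : Finset ℝ) (k : ℕ) (s : ι → Prop)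
    (H : ∀ g : ℂ[X], g.natDegree < k → (∀ i, s i → evalMap p D B g i = 0) → g = 0) :
    Function.Injective (evalOn p D B k s) := by
  rw [injective_iff_map_eq_zero]
  rintro ⟨g, hg⟩ h0
  ext1
  by_contra hne
  refine hne (H g ((natDegree_lt_iff_degree_lt hne).2 (mem_degreeLT.1 hg)) fun i hi => ?_)
  exact congrFun h0 ⟨i, hi⟩

/-- The residue at a pole `r` of `|f|² · G` is a square times a number with the sign of
`S'(r) · ∏ᵢ (r - pᵢ)`, where `S = c ∏ₐ (t - a)` over `a ∈ A`. The identity also holds when the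
denominator vanishes, both sides being `0` then. -/
lemma residue_pole [Fintype ι] {A : Finset ℝ} (p : ι → ℝ) (c : ℝ) {B : Finset ℝ} (hB : B ⊆ A) (g : ℂ[X]) {r : ℝ}
    (hr : r ∈ B) :
    (c * ‖g.eval (r : ℂ)‖ ^ 2 * ∏ s ∈ A \ B, (r - s)) /
      ((∏ i, (r - p i)) * ∏ s ∈ B.erase r, (r - s)) =
    (c * (∏ s ∈ A.erase r, (r - s)) * ∏ i, (r - p i)) *
      (‖g.eval (r : ℂ)‖ / ((∏ i, (r - p i)) * ∏ s ∈ B.erase r, (r - s))) ^ 2 := by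
  have h1 : (∏ s ∈ A \ B, (r - s)) * ∏ s ∈ B.erase r, (r - s) = ∏ s ∈ A.erase r, (r - s) := by
    rw [← Finset.prod_sdiff (Finset.erase_subset_erase r hB)]
    congr 2
    ext s
    simp only [Finset.mem_sdiff, Finset.mem_erase]
    constructor
    · rintro ⟨h1, h2⟩
      exact ⟨⟨fun h => h2 (h ▸ hr), h1⟩, fun h => h2 h.2⟩
    · rintro ⟨⟨h1, h2⟩, h3⟩
      exact ⟨h2, fun h => h3 ⟨h1, h⟩⟩
  rw [← h1]
  generalize (∏ i, (r - p i)) = L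
  generalize (∏ s ∈ B.erase r, (r - s)) = s
  by_cases hL : L = 0
  · simp [hL]
  by_cases hs : s = 0
  · simp [hs]
  field_simp

variable [Fintype ι] [DecidableEq ι]

/-- The evaluation at the nodes of a factorization `P(t) = c · ∏_{a ∈ A} (t - a) · |D(t)|²` of the
numerator `P` of `G(t) = ∑ᵢ wᵢ / (t - pᵢ)`, with distinct nodes `pᵢ` and nonzero weights `wᵢ`. Note
that `P(pᵢ) = wᵢ ∏_{j ≠ i} (pᵢ - pⱼ)`. -/
structure Factored (p w : ι → ℝ) (c : ℝ) (A : Finset ℝ) (D : ℂ[X]) : Prop where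
  inj : Function.Injective p
  ne : ∀ i, w i ≠ 0
  eq : ∀ i, w i * ∏ j ∈ Finset.univ.erase i, (p i - p j) =
    c * (∏ r ∈ A, (p i - r)) * ‖D.eval (p i : ℂ)‖ ^ 2

variable {p w : ι → ℝ} {c : ℝ} {A : Finset ℝ} {D : ℂ[X]}

lemma Factored.nodal_ne (h : Factored p w c A D) (i : ι) :
    ∏ j ∈ Finset.univ.erase i, (p i - p j) ≠ 0 :=
  Finset.prod_ne_zero_iff.2 fun _ hj =>
    sub_ne_zero.2 fun he => (Finset.ne_of_mem_erase hj) (h.inj he).symm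

lemma Factored.rhs_ne (h : Factored p w c A D) (i : ι) :
    c * (∏ r ∈ A, (p i - r)) * ‖D.eval (p i : ℂ)‖ ^ 2 ≠ 0 :=
  h.eq i ▸ mul_ne_zero (h.ne i) (h.nodal_ne i)

lemma Factored.D_ne (h : Factored p w c A D) (i : ι) : D.eval (p i : ℂ) ≠ 0 := by
  intro h0
  exact h.rhs_ne i (by simp [h0])

lemma Factored.notMem (h : Factored p w c A D) (i : ι) : p i ∉ A := by
  intro hi
  exact h.rhs_ne i (by rw [Finset.prod_eq_zero hi (sub_self _)]; simp)

lemma Factored.prod_ne (h : Factored p w c A D) {B : Finset ℝ} (hB : B ⊆ A) (i : ι) :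
    ∏ r ∈ B, (p i - r) ≠ 0 :=
  Finset.prod_ne_zero_iff.2 fun _ hr => sub_ne_zero.2 fun he => h.notMem i (he ▸ hB hr)

/-- The numerator of `|f|² · G`, for `f` as in `evalMap`, with `E = A \ B`. -/
lemma exists_numerator (c : ℝ) (g : ℂ[X]) (E : Finset ℝ) :
    ∃ N : ℝ[X], N.natDegree ≤ 2 * g.natDegree + E.card ∧
      ∀ t : ℝ, N.eval t = c * ‖g.eval (t : ℂ)‖ ^ 2 * ∏ r ∈ E, (t - r) := by
  obtain ⟨R, hR, hRe⟩ := exists_normSq_poly g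
  refine ⟨C c * R * ∏ r ∈ E, (X - C r), ?_, fun t => ?_⟩
  · refine natDegree_mul_le.trans (add_le_add ((natDegree_C_mul_le _ _).trans hR) ?_)
    rw [natDegree_prod_of_monic _ _ fun r _ => monic_X_sub_C r]
    simp
  · simp [hRe, eval_prod]

/-- The residue of `|f|² · G` at the node `pᵢ` is `wᵢ |f(pᵢ)|²`. -/
lemma Factored.residue_node (h : Factored p w c A D) {B : Finset ℝ} (hB : B ⊆ A) (g : ℂ[X])
    (i : ι) :
    (c * ‖g.eval (p i : ℂ)‖ ^ 2 * ∏ r ∈ A \ B, (p i - r)) /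
      ((∏ j ∈ Finset.univ.erase i, (p i - p j)) * ∏ r ∈ B, (p i - r)) =
    w i * ‖evalMap p D B g i‖ ^ 2 := by
  have h1 := h.nodal_ne i
  have h2 := h.prod_ne hB i
  have h3 : ‖D.eval (p i : ℂ)‖ ≠ 0 := norm_ne_zero_iff.2 (h.D_ne i)
  have h4 := h.eq i
  rw [← Finset.prod_sdiff hB] at h4
  rw [evalMap_apply, norm_mul, norm_inv, norm_mul, Complex.norm_real, mul_pow, inv_pow, mul_pow,
    Real.norm_eq_abs, sq_abs]
  generalize (∏ j ∈ Finset.univ.erase i, (p i - p j)) = L at *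
  generalize (∏ r ∈ B, (p i - r)) = s at *
  generalize (∏ r ∈ A \ B, (p i - r)) = u at *
  generalize ‖D.eval (p i : ℂ)‖ = d at *
  generalize ‖g.eval (p i : ℂ)‖ = e at *
  have : w i = c * (u * s) * d ^ 2 / L := by rw [← h4]; field_simp
  rw [this]
  field_simp

/-- When the poles `r ∈ B` of `|f|² · G` carry residues `≤ 0`, the form with weights
`wᵢ / (t - pᵢ)` is nonnegative on the values of `f`: it is `|f(t)|² G(t)` minus the terms of these
poles. -/
lemma Factored.form_nonneg (h : Factored p w c A D) (hc : 0 < c) (hp : ∀ i, p i < 0)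
    (hA : ∀ r ∈ A, r ≤ 0) {B : Finset ℝ} (hB : B ⊆ A)
    (hsign : ∀ r ∈ B, c * (∏ s ∈ A.erase r, (r - s)) * ∏ i, (r - p i) ≤ 0) {g : ℂ[X]}
    (hg : 2 * g.natDegree + (A \ B).card < Fintype.card ι + B.card) {t : ℝ} (ht : 0 < t) :
    0 ≤ ∑ i, w i * ‖evalMap p D B g i‖ ^ 2 / (t - p i) := by
  obtain ⟨N, hN, hNe⟩ := exists_numerator c g (A \ B)
  have key := partial_fractions h.inj (B := B) (fun i hi => h.notMem i (hB hi))
    (lt_of_le_of_lt hN hg) (t := t) (fun i => by linarith [hp i])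
    (fun hm => by linarith [hA t (hB hm)])
  simp only [hNe, h.residue_node hB] at key
  have h1 : ∑ r ∈ B, (c * ‖g.eval (r : ℂ)‖ ^ 2 * ∏ s ∈ A \ B, (r - s)) /
      ((∏ i, (r - p i)) * ∏ s ∈ B.erase r, (r - s)) / (t - r) ≤ 0 := by
    refine Finset.sum_nonpos fun r hr => ?_
    rw [residue_pole p c hB g hr]
    exact div_nonpos_of_nonpos_of_nonneg
      (mul_nonpos_of_nonpos_of_nonneg (hsign r hr) (sq_nonneg _)) (by linarith [hA r (hB hr)])
  have h2 : 0 ≤ (c * ‖g.eval (t : ℂ)‖ ^ 2 * ∏ s ∈ A \ B, (t - s)) /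
      ((∏ i, (t - p i)) * ∏ s ∈ B, (t - s)) := by
    refine div_nonneg (mul_nonneg (by positivity) ?_) (mul_nonneg ?_ ?_)
    · exact Finset.prod_nonneg fun s hs => by linarith [hA s (Finset.mem_sdiff.1 hs).1]
    · exact Finset.prod_nonneg fun i _ => by linarith [hp i]
    · exact Finset.prod_nonneg fun s hs => by linarith [hA s (hB hs)]
  linarith

/-- When the poles `r ∈ B` carry residues `≥ 0` and `|f|² · G` is `O(t⁻²)`, the sum of all residues
vanishes, so the form with weights `wᵢ` is nonpositive on the values of `f`. -/
lemma Factored.form_nonpos (h : Factored p w c A D) {B : Finset ℝ} (hB : B ⊆ A)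
    (hsign : ∀ r ∈ B, 0 ≤ c * (∏ s ∈ A.erase r, (r - s)) * ∏ i, (r - p i)) {g : ℂ[X]}
    (hg : 2 * g.natDegree + (A \ B).card + 1 < Fintype.card ι + B.card) :
    ∑ i, w i * ‖evalMap p D B g i‖ ^ 2 ≤ 0 := by
  obtain ⟨N, hN, hNe⟩ := exists_numerator c g (A \ B)
  have key := sum_residues h.inj (B := B) (fun i hi => h.notMem i (hB hi)) (N := N) (by omega)
  simp only [hNe, h.residue_node hB] at key
  have h1 : 0 ≤ ∑ r ∈ B, (c * ‖g.eval (r : ℂ)‖ ^ 2 * ∏ s ∈ A \ B, (r - s)) /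
      ((∏ i, (r - p i)) * ∏ s ∈ B.erase r, (r - s)) := by
    refine Finset.sum_nonneg fun r hr => ?_
    rw [residue_pole p c hB g hr]
    exact mul_nonneg (hsign r hr) (sq_nonneg _)
  linarith

lemma Factored.eq_zero (h : Factored p w c A D) {B : Finset ℝ} (hB : B ⊆ A) {g : ℂ[X]}
    (hg : g.natDegree < Fintype.card ι) (h0 : ∀ i, evalMap p D B g i = 0) : g = 0 := by
  refine eq_zero_of_natDegree_lt_card_of_eval_eq_zero g (f := fun i => (p i : ℂ))
    (Complex.ofReal_injective.comp h.inj) (fun i => ?_) hg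
  have h1 := h0 i
  rw [evalMap_apply] at h1
  refine (mul_eq_zero.1 h1).resolve_left (inv_ne_zero (mul_ne_zero (h.D_ne i) ?_))
  exact_mod_cast h.prod_ne hB i

/-- A maximal nonnegative subspace containing the constant function `1`, written as the graph of a
linear map over the coordinates of positive weight. Maximality is a dimension count: functions whose
poles are the points of `A` with residue `≤ 0` form a nonnegative space of dimension
`|B| + deg D + 1`, those with the other poles a nonpositive space of dimension `|A \ B| + deg D`.
These numbers add up to the dimension of the whole space, and neither can exceed the number of
weights of its own sign. -/
lemma Factored.exists_map (h : Factored p w c A D) (hc : 0 < c) (hp : ∀ i, p i < 0)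
    (hA : ∀ r ∈ A, r ≤ 0) (hcard : A.card + 2 * D.natDegree + 1 = Fintype.card ι) :
    ∃ Φ : ({i // 0 < w i} → ℂ) →ₗ[ℂ] (ι → ℂ), (∀ u i, Φ u i.1 = u i) ∧ Φ 1 = 1 ∧
      ∀ u, ∀ t : ℝ, 0 < t → 0 ≤ ∑ i, w i * ‖Φ u i‖ ^ 2 / (t - p i) := by
  classical
  set m := D.natDegree with hm
  let B := A.filter fun r => c * (∏ s ∈ A.erase r, (r - s)) * ∏ i, (r - p i) ≤ 0
  have hBA : B ⊆ A := Finset.filter_subset _ _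
  have hBs : ∀ r ∈ B, c * (∏ s ∈ A.erase r, (r - s)) * ∏ i, (r - p i) ≤ 0 :=
    fun r hr => (Finset.mem_filter.1 hr).2
  have hBA' : A \ B ⊆ A := Finset.sdiff_subset
  have hBs' : ∀ r ∈ A \ B, 0 ≤ c * (∏ s ∈ A.erase r, (r - s)) * ∏ i, (r - p i) := by
    intro r hr
    have := Finset.mem_sdiff.1 hr
    by_contra! hh
    exact this.2 (Finset.mem_filter.2 ⟨this.1, hh.le⟩)
  have hAA : A \ (A \ B) = B := Finset.sdiff_sdiff_eq_self hBA
  have hcB : (A \ B).card + B.card = A.card := Finset.card_sdiff_add_card_eq_card hBA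
  have form : ∀ g : ℂ[X], g.natDegree < B.card + m + 1 → ∀ t : ℝ, 0 < t →
      0 ≤ ∑ i, w i * ‖evalMap p D B g i‖ ^ 2 / (t - p i) := fun g hg t ht =>
    h.form_nonneg hc hp hA hBA hBs (by omega) ht
  have inj₁ : Function.Injective (evalOn p D B (B.card + m + 1) fun i => 0 < w i) := by
    refine evalOn_injective _ _ _ _ _ fun g hg h0 => h.eq_zero hBA (by omega) fun i => ?_
    have hle : ∀ i ∈ Finset.univ, w i * ‖evalMap p D B g i‖ ^ 2 / (1 - p i) ≤ 0 := by
      intro i _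
      rcases lt_or_ge 0 (w i) with hi | hi
      · simp [h0 i hi]
      · exact div_nonpos_of_nonpos_of_nonneg
          (mul_nonpos_of_nonpos_of_nonneg hi (sq_nonneg _)) (by linarith [hp i])
    have := (Finset.sum_eq_zero_iff_of_nonpos hle).1
      (le_antisymm (Finset.sum_nonpos hle) (form g hg 1 one_pos)) i (Finset.mem_univ i)
    have hpi : 1 - p i ≠ 0 := by linarith [hp i]
    simpa [h.ne i, hpi] using this
  have inj₂ : Function.Injective (evalOn p D (A \ B) ((A \ B).card + m) fun i => ¬ 0 < w i) := by
    refine evalOn_injective _ _ _ _ _ fun g hg h0 => h.eq_zero hBA' (by omega) fun i => ?_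
    have hge : ∀ i ∈ Finset.univ, 0 ≤ w i * ‖evalMap p D (A \ B) g i‖ ^ 2 := by
      intro i _
      by_cases hi : 0 < w i
      · positivity
      · simp [h0 i hi]
    have := (Finset.sum_eq_zero_iff_of_nonneg hge).1
      (le_antisymm (h.form_nonpos hBA' hBs' (by rw [hAA]; omega)) (Finset.sum_nonneg hge)) i
        (Finset.mem_univ i)
    simpa [h.ne i] using this
  have d₁ := LinearMap.finrank_le_finrank_of_injective inj₁
  have d₂ := LinearMap.finrank_le_finrank_of_injective inj₂
  rw [finrank_degreeLT, Module.finrank_fintype_fun_eq_card] at d₁ d₂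
  have d₃ := Fintype.card_subtype_compl (fun i => 0 < w i)
  have d₄ := Fintype.card_subtype_le (fun i => 0 < w i)
  have hrank : Module.finrank ℂ (degreeLT ℂ (B.card + m + 1)) =
      Module.finrank ℂ ({i // 0 < w i} → ℂ) := by
    rw [finrank_degreeLT, Module.finrank_fintype_fun_eq_card]
    omega
  let e := LinearEquiv.ofBijective _
    ⟨inj₁, (LinearMap.injective_iff_surjective_of_finrank_eq_finrank hrank).1 inj₁⟩
  refine ⟨evalMap p D B ∘ₗ (degreeLT ℂ _).subtype ∘ₗ e.symm.toLinearMap, fun u i => ?_, ?_,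
    fun u t ht => ?_⟩
  · exact congrFun (e.apply_symm_apply u) i
  · let q : ℂ[X] := D * ∏ r ∈ B, (X - C (r : ℂ))
    have hq : q ∈ degreeLT ℂ (B.card + m + 1) := by
      rw [mem_degreeLT]
      refine lt_of_le_of_lt degree_le_natDegree ?_
      have : q.natDegree ≤ m + B.card := by
        refine natDegree_mul_le.trans (add_le_add le_rfl ?_)
        rw [natDegree_prod_of_monic B (fun r : ℝ => X - C (r : ℂ)) fun r _ => monic_X_sub_C _]
        simp
      exact_mod_cast (by omega : q.natDegree < B.card + m + 1)
    have hq1 : evalMap p D B q = 1 := by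
      ext i
      have h2 : ((∏ r ∈ B, (p i - r) : ℝ) : ℂ) ≠ 0 := by exact_mod_cast h.prod_ne hBA i
      have h3 : q.eval (p i : ℂ) = D.eval (p i : ℂ) * ((∏ r ∈ B, (p i - r) : ℝ) : ℂ) := by
        simp [q, eval_prod]
      rw [evalMap_apply, h3, inv_mul_cancel₀ (mul_ne_zero (h.D_ne i) h2)]
      rfl
    have he : e.symm 1 = ⟨q, hq⟩ := by
      rw [LinearEquiv.symm_apply_eq]
      ext i
      exact (congrFun hq1 i.1).symm
    simp [he, hq1]
  · set g := e.symm u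
    by_cases hg : (g : ℂ[X]) = 0
    · simp [hg, g]
    · exact form g ((natDegree_lt_iff_degree_lt hg).2 (mem_degreeLT.1 g.2)) t ht

/-- Existence of a maximal subspace, containing the constant function `1`, on which the forms with
weights `wᵢ / (t - pᵢ)` are nonnegative for all `t > 0`. -/
lemma exists_max_map (hinj : Function.Injective p) (hp : ∀ i, p i < 0) (hw : ∀ i, w i ≠ 0)
    (hsum : 0 < ∑ i, w i) (hG : ∀ t : ℝ, 0 < t → 0 ≤ ∑ i, w i / (t - p i)) :
    ∃ Φ : ({i // 0 < w i} → ℂ) →ₗ[ℂ] (ι → ℂ), (∀ u i, Φ u i.1 = u i) ∧ Φ 1 = 1 ∧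
      ∀ u, ∀ t : ℝ, 0 < t → 0 ≤ ∑ i, w i * ‖Φ u i‖ ^ 2 / (t - p i) := by
  have hne : Nonempty ι := by
    by_contra hemp
    rw [not_nonempty_iff] at hemp
    simp at hsum
  have hcard : 0 < Fintype.card ι := Fintype.card_pos
  let P : ℝ[X] := ∑ i, C (w i) * Lagrange.nodal (Finset.univ.erase i) p
  have hnd : ∀ i, (Lagrange.nodal (Finset.univ.erase i) p).natDegree = Fintype.card ι - 1 := by
    intro i
    rw [Lagrange.natDegree_nodal, Finset.card_erase_of_mem (Finset.mem_univ i), Finset.card_univ]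
  have hle : P.natDegree ≤ Fintype.card ι - 1 :=
    natDegree_sum_le_of_forall_le _ _ fun i _ => (natDegree_C_mul_le _ _).trans (hnd i).le
  have hco : P.coeff (Fintype.card ι - 1) = ∑ i, w i := by
    simp only [P, finsetSum_coeff, coeff_C_mul]
    refine Finset.sum_congr rfl fun i _ => ?_
    rw [← hnd i, (Lagrange.nodal_monic).coeff_natDegree, mul_one]
  have hdeg : P.natDegree = Fintype.card ι - 1 :=
    le_antisymm hle (le_natDegree_of_ne_zero (hco ▸ hsum.ne'))
  have hlc : P.leadingCoeff = ∑ i, w i := by rw [leadingCoeff, hdeg, hco]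
  have hP0 : P ≠ 0 := by
    rw [← leadingCoeff_ne_zero, hlc]; exact hsum.ne'
  obtain ⟨A, D, hD, hAD, hev⟩ := exists_factor _ P hP0 hdeg
  rw [hlc] at hev
  have hPt : ∀ t : ℝ, 0 < t → 0 ≤ P.eval t := by
    intro t ht
    have : P.eval t = (∏ i, (t - p i)) * ∑ i, w i / (t - p i) := by
      simp only [P, eval_finsetSum, eval_mul, eval_C, Lagrange.eval_nodal]
      rw [Finset.mul_sum]
      refine Finset.sum_congr rfl fun i _ => ?_
      rw [← Finset.mul_prod_erase _ _ (Finset.mem_univ i)]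
      have : t - p i ≠ 0 := by linarith [hp i]
      field_simp
    rw [this]
    exact mul_nonneg (Finset.prod_nonneg fun i _ => by linarith [hp i]) (hG t ht)
  have hA := roots_nonpos hsum.ne' hD (A := A) fun t ht => hev t ▸ hPt t ht
  have hF : Factored p w (∑ i, w i) A D := by
    refine ⟨hinj, hw, fun i => ?_⟩
    rw [← hev]
    simp only [P, eval_finsetSum, eval_mul, eval_C]
    rw [Finset.sum_eq_single i, Lagrange.eval_nodal]
    · intro j _ hj
      rw [Lagrange.eval_nodal_at_node (Finset.mem_erase.2 ⟨hj.symm, Finset.mem_univ i⟩), mul_zero]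
    · simp
  exact hF.exists_map hsum hp hA (by omega)

end Krein

/-! ### Exact contractions -/

/-- The case of nonzero weights `λᵢ (|xᵢ|² - |yᵢ|²)` with positive sum. Where `|yᵢ| < |xᵢ|` the
operator is multiplication by `yᵢ / xᵢ`, and the energy lost there is passed, through the map of
`exists_max_map` in the coordinate `ξᵢ / xᵢ`, to the indices with `|xᵢ| < |yᵢ|`. -/
lemma exists_contraction_of_strict {n : ℕ} {lam : Fin n → ℝ} (hpos : ∀ i, 0 < lam i)
    (hinj : Function.Injective lam) {x y : Fin n → ℂ} (hne : ∀ i, ‖x i‖ ≠ ‖y i‖)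
    (hsum : 0 < ∑ i, lam i * (‖x i‖ ^ 2 - ‖y i‖ ^ 2))
    (hK : ∀ t : ℝ, 0 < t →
      ∑ i, lam i / (t + lam i) * ‖y i‖ ^ 2 ≤ ∑ i, lam i / (t + lam i) * ‖x i‖ ^ 2) :
    ∃ T : Matrix (Fin n) (Fin n) ℂ, T.mulVec x = y ∧
      ∀ t : ℝ, 0 < t → ∀ ξ : Fin n → ℂ,
        ∑ i, lam i / (t + lam i) * ‖T.mulVec ξ i‖ ^ 2 ≤
          ∑ i, lam i / (t + lam i) * ‖ξ i‖ ^ 2 := by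
  let w : Fin n → ℝ := fun i => lam i * (‖x i‖ ^ 2 - ‖y i‖ ^ 2)
  have hwpos : ∀ i, 0 < w i ↔ ‖y i‖ < ‖x i‖ := fun i => by
    simp only [w]
    rw [mul_pos_iff_of_pos_left (hpos i), sub_pos,
      sq_lt_sq₀ (norm_nonneg _) (norm_nonneg _)]
  obtain ⟨Φ, hΦ, hΦ1, hform⟩ := exists_max_map (p := fun i => -lam i) (w := w)
    (fun i j h => hinj (neg_injective h)) (fun i => neg_lt_zero.2 (hpos i))
    (fun i => mul_ne_zero (hpos i).ne' (sub_ne_zero.2 fun h =>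
      hne i ((sq_eq_sq₀ (norm_nonneg _) (norm_nonneg _)).1 h))) hsum
    (fun t ht => by
      have := sub_nonneg.2 (hK t ht)
      rw [← Finset.sum_sub_distrib] at this
      refine this.trans_eq (Finset.sum_congr rfl fun i _ => ?_)
      simp only [w, sub_neg_eq_add]
      ring)
  let U : (Fin n → ℂ) →ₗ[ℂ] ({i // 0 < w i} → ℂ) :=
    LinearMap.pi fun i => (x i.1)⁻¹ • LinearMap.proj i.1
  have hU : ∀ ξ i, U ξ i = (x i.1)⁻¹ * ξ i.1 := fun ξ i => rfl
  have hx0 : ∀ i, 0 < w i → x i ≠ 0 := fun i hi =>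
    norm_pos_iff.1 ((norm_nonneg _).trans_lt ((hwpos i).1 hi))
  have hlt : ∀ i, ¬ 0 < w i → ‖x i‖ < ‖y i‖ := fun i hi =>
    lt_of_le_of_ne (not_lt.1 fun h => hi ((hwpos i).2 h)) (hne i)
  have hUx : U x = 1 := by
    ext i
    rw [hU, inv_mul_cancel₀ (hx0 i.1 i.2)]
    rfl
  let T : (Fin n → ℂ) →ₗ[ℂ] (Fin n → ℂ) := LinearMap.pi fun i =>
    if 0 < w i then (y i / x i) • LinearMap.proj i
    else (y i / (‖y i‖ : ℂ) ^ 2) • ((starRingEnd ℂ (x i)) • LinearMap.proj i +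
      ((‖y i‖ ^ 2 - ‖x i‖ ^ 2 : ℝ) : ℂ) • (LinearMap.proj i ∘ₗ Φ ∘ₗ U))
  have hTp : ∀ i, 0 < w i → ∀ ξ, T ξ i = y i / x i * ξ i := by
    intro i hi ξ
    simp [T, hi]
  have hTn : ∀ i, ¬ 0 < w i → ∀ ξ, T ξ i = y i / (‖y i‖ : ℂ) ^ 2 *
      (starRingEnd ℂ (x i) * ξ i + ((‖y i‖ ^ 2 - ‖x i‖ ^ 2 : ℝ) : ℂ) * Φ (U ξ) i) := by
    intro i hi ξ
    simp only [T, LinearMap.pi_apply, if_neg hi]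
    rfl
  refine ⟨LinearMap.toMatrix' T, ?_, fun t ht ξ => ?_⟩
  · rw [LinearMap.toMatrix'_mulVec]
    ext i
    by_cases hi : 0 < w i
    · rw [hTp i hi, div_mul_cancel₀ _ (hx0 i hi)]
    · have hy : (‖y i‖ : ℂ) ≠ 0 := by
        exact_mod_cast ((norm_nonneg _).trans_lt (hlt i hi)).ne'
      rw [hTn i hi, hUx, hΦ1, mul_comm (starRingEnd ℂ (x i)), Complex.mul_conj,
        Complex.normSq_eq_norm_sq]
      push_cast
      simp only [Pi.one_apply]
      field_simp
      ring
  · rw [LinearMap.toMatrix'_mulVec]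
    have key : ∀ i, lam i * ‖T ξ i‖ ^ 2 ≤ lam i * ‖ξ i‖ ^ 2 - w i * ‖Φ (U ξ) i‖ ^ 2 := by
      intro i
      by_cases hi : 0 < w i
      · have hx : ‖x i‖ ≠ 0 := norm_ne_zero_iff.2 (hx0 i hi)
        rw [hTp i hi, hΦ _ ⟨i, hi⟩, hU, norm_mul, norm_mul, norm_div, norm_inv]
        apply le_of_eq
        simp only [w]
        field_simp
        ring
      · have hy : 0 < ‖y i‖ := (norm_nonneg _).trans_lt (hlt i hi)
        have hd : 0 ≤ ‖y i‖ ^ 2 - ‖x i‖ ^ 2 := by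
          have := pow_le_pow_left₀ (norm_nonneg _) (hlt i hi).le 2
          linarith
        have h1 : ‖T ξ i‖ ≤ (‖x i‖ * ‖ξ i‖ + (‖y i‖ ^ 2 - ‖x i‖ ^ 2) * ‖Φ (U ξ) i‖) / ‖y i‖ := by
          rw [hTn i hi, norm_mul, norm_div, norm_pow, Complex.norm_real, norm_norm]
          have h2 : ‖starRingEnd ℂ (x i) * ξ i +
              ((‖y i‖ ^ 2 - ‖x i‖ ^ 2 : ℝ) : ℂ) * Φ (U ξ) i‖ ≤
              ‖x i‖ * ‖ξ i‖ + (‖y i‖ ^ 2 - ‖x i‖ ^ 2) * ‖Φ (U ξ) i‖ := by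
            refine (norm_add_le _ _).trans_eq ?_
            rw [norm_mul, norm_mul, Complex.norm_real, Real.norm_of_nonneg hd, RCLike.norm_conj]
          rw [show ‖y i‖ / ‖y i‖ ^ 2 = ‖y i‖⁻¹ by field_simp, inv_mul_eq_div]
          gcongr
        have h3 : ‖T ξ i‖ ^ 2 ≤ ‖ξ i‖ ^ 2 + (‖y i‖ ^ 2 - ‖x i‖ ^ 2) * ‖Φ (U ξ) i‖ ^ 2 := by
          refine (pow_le_pow_left₀ (norm_nonneg _) h1 2).trans ?_
          rw [div_pow, div_le_iff₀ (by positivity)]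
          -- Cauchy–Schwarz: the defect is a multiple of a square
          have := mul_nonneg hd (sq_nonneg (‖ξ i‖ - ‖x i‖ * ‖Φ (U ξ) i‖))
          linarith
        have h4 := mul_le_mul_of_nonneg_left h3 (hpos i).le
        simp only [w]
        linarith
    have hf := hform (U ξ) t ht
    have h5 : ∑ i, lam i / (t + lam i) * ‖T ξ i‖ ^ 2 ≤
        ∑ i, (lam i / (t + lam i) * ‖ξ i‖ ^ 2 - w i * ‖Φ (U ξ) i‖ ^ 2 / (t - -lam i)) := by
      refine Finset.sum_le_sum fun i _ => ?_
      have := div_le_div_of_nonneg_right (key i) (by linarith [hpos i] : 0 ≤ t + lam i)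
      rw [sub_neg_eq_add]
      calc _ = lam i * ‖T ξ i‖ ^ 2 / (t + lam i) := by ring
        _ ≤ _ := this
        _ = _ := by ring
    rw [Finset.sum_sub_distrib] at h5
    linarith

/-- The leading term of the hypothesis as `t → ∞`. -/
lemma weighted_sum_nonneg {n : ℕ} {lam : Fin n → ℝ} {x y : Fin n → ℂ}
    (hK : ∀ t : ℝ, 0 < t →
      ∑ i, lam i / (t + lam i) * ‖y i‖ ^ 2 ≤ ∑ i, lam i / (t + lam i) * ‖x i‖ ^ 2) :
    0 ≤ ∑ i, lam i * (‖x i‖ ^ 2 - ‖y i‖ ^ 2) := by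
  have h1 : ∀ a : ℝ, Filter.Tendsto (fun t : ℝ => t / (t + a)) Filter.atTop (nhds 1) := by
    intro a
    have h := (tendsto_const_nhds (x := a)).div_atTop
      (Filter.tendsto_atTop_add_const_right Filter.atTop a Filter.tendsto_id)
    have h' := (tendsto_const_nhds (x := (1 : ℝ))).sub h
    rw [sub_zero] at h'
    refine h'.congr' ?_
    filter_upwards [Filter.eventually_gt_atTop (-a)] with t ht
    have : t + a ≠ 0 := by linarith
    simp only [id]
    field_simp
    ring
  have h2 : Filter.Tendsto (fun t : ℝ => ∑ i, t / (t + lam i) * (lam i * (‖x i‖ ^ 2 - ‖y i‖ ^ 2)))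
      Filter.atTop (nhds (∑ i, 1 * (lam i * (‖x i‖ ^ 2 - ‖y i‖ ^ 2)))) :=
    tendsto_finsetSum _ fun i _ => (h1 (lam i)).mul_const _
  simp only [one_mul] at h2
  refine ge_of_tendsto h2 ?_
  filter_upwards [Filter.eventually_gt_atTop 0] with t ht
  have h3 := mul_nonneg ht.le (sub_nonneg.2 (hK t ht))
  rw [← Finset.sum_sub_distrib, Finset.mul_sum] at h3
  refine h3.trans_eq (Finset.sum_congr rfl fun i _ => ?_)
  ring

lemma contraction_entry_le {n : ℕ} {lam : Fin n → ℝ} (hpos : ∀ i, 0 < lam i)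
    {T : Matrix (Fin n) (Fin n) ℂ}
    (hT : ∀ t : ℝ, 0 < t → ∀ ξ : Fin n → ℂ,
        ∑ i, lam i / (t + lam i) * ‖T.mulVec ξ i‖ ^ 2 ≤
          ∑ i, lam i / (t + lam i) * ‖ξ i‖ ^ 2) (i j : Fin n) :
    ‖T i j‖ ≤ (1 + lam i) / lam i := by
  have h1 := hT 1 one_pos (Pi.single j 1)
  have hl := hpos i
  have h2 : ∑ k, lam k / (1 + lam k) * ‖(Pi.single j 1 : Fin n → ℂ) k‖ ^ 2 ≤ 1 := by
    rw [Finset.sum_eq_single j]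
    · have := hpos j
      rw [Pi.single_eq_same, norm_one, one_pow, mul_one, div_le_one (by linarith)]
      linarith
    · intro k _ hk
      simp [hk]
    · simp
  have h3 : lam i / (1 + lam i) * ‖T i j‖ ^ 2 ≤ 1 := by
    refine le_trans ?_ (h1.trans h2)
    have h4 := Finset.single_le_sum (f := fun k => lam k / (1 + lam k) *
      ‖T.mulVec (Pi.single j 1) k‖ ^ 2) (fun k _ => by have := hpos k; positivity)
      (Finset.mem_univ i)
    simpa [Matrix.mulVec_single_one] using h4
  have h5 : 1 ≤ (1 + lam i) / lam i := by rw [le_div_iff₀ hl]; linarith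
  have h6 : ‖T i j‖ ^ 2 ≤ (1 + lam i) / lam i := by
    rw [div_mul_eq_mul_div, div_le_one (by linarith)] at h3
    rw [le_div_iff₀ hl]; linarith
  by_contra! h7
  nlinarith

end

open Matrix

/-- For distinct positive weights `0 < λ₁ < ⋯ < λₙ`, if
`k_λ(t, y⁰) ≤ k_λ(t, x⁰)` for all `t > 0`, with
`k_λ(t, x) = ∑ᵢ (λᵢ/(t+λᵢ))|xᵢ|²`, then there is a matrix `T` with `T x⁰ = y⁰`
which is an exact contraction: `k_λ(t, T x) ≤ k_λ(t, x)` for all `x` and `t > 0`. -/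
theorem finite_dim_K_property
    (n : ℕ) (lam : Fin n → ℝ) (hpos : ∀ i, 0 < lam i) (hmono : StrictMono lam)
    (x₀ y₀ : Fin n → ℂ)
    (hK : ∀ t : ℝ, 0 < t →
      ∑ i, lam i / (t + lam i) * ‖y₀ i‖ ^ 2 ≤ ∑ i, lam i / (t + lam i) * ‖x₀ i‖ ^ 2) :
    ∃ T : Matrix (Fin n) (Fin n) ℂ, T.mulVec x₀ = y₀ ∧
      ∀ t : ℝ, 0 < t → ∀ x : Fin n → ℂ,
        ∑ i, lam i / (t + lam i) * ‖T.mulVec x i‖ ^ 2 ≤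
          ∑ i, lam i / (t + lam i) * ‖x i‖ ^ 2 := by
  rcases Nat.eq_zero_or_pos n with rfl | hn
  · exact ⟨0, Subsingleton.elim _ _, fun t _ x => by simp⟩
  have : Nonempty (Fin n) := ⟨⟨0, hn⟩⟩
  -- Adding `s` to each modulus of `x₀`, with the phase kept, makes every weight nonzero for small
  -- `s > 0` and can only increase the right-hand side of `hK`.
  let u : Fin n → ℂ := fun i => if x₀ i = 0 then 1 else x₀ i / ‖x₀ i‖
  let xs : ℝ → Fin n → ℂ := fun s i => x₀ i + s * u i
  have hxs : ∀ s, 0 < s → ∀ i, ‖xs s i‖ = ‖x₀ i‖ + s := by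
    intro s hs i
    by_cases h0 : x₀ i = 0
    · simp [xs, u, h0, abs_of_pos hs]
    · have h1 : (‖x₀ i‖ : ℂ) ≠ 0 := by exact_mod_cast norm_ne_zero_iff.2 h0
      have h2 : xs s i = x₀ i * (((‖x₀ i‖ + s) / ‖x₀ i‖ : ℝ) : ℂ) := by
        simp only [xs, u, if_neg h0]
        push_cast
        field_simp
      have h3 : 0 < ‖x₀ i‖ := norm_pos_iff.2 h0
      rw [h2, norm_mul, Complex.norm_real, Real.norm_of_nonneg (by positivity)]
      field_simp
  have hgood : ∀ᶠ s in nhdsWithin (0 : ℝ) (Set.Ioi 0), 0 < s ∧ ∀ i, ‖xs s i‖ ≠ ‖y₀ i‖ := by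
    have h1 : ∀ i, ∀ᶠ s in nhdsWithin (0 : ℝ) (Set.Ioi 0), s ≠ ‖y₀ i‖ - ‖x₀ i‖ := by
      intro i
      by_cases h : 0 < ‖y₀ i‖ - ‖x₀ i‖
      · exact Filter.Eventually.filter_mono nhdsWithin_le_nhds
          ((eventually_lt_nhds h).mono fun s hs => hs.ne)
      · filter_upwards [self_mem_nhdsWithin] with s (hs : 0 < s)
        intro he
        exact h (he ▸ hs)
    filter_upwards [self_mem_nhdsWithin, Filter.eventually_all.2 h1] with s (hs : 0 < s) hs1
    refine ⟨hs, fun i he => hs1 i ?_⟩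
    rw [hxs s hs i] at he
    linarith
  obtain ⟨s, hs, hsg⟩ := Filter.exists_seq_forall_of_frequently hgood.frequently
  have hex : ∀ k, ∃ T : Matrix (Fin n) (Fin n) ℂ, T.mulVec (xs (s k)) = y₀ ∧
      ∀ t : ℝ, 0 < t → ∀ x : Fin n → ℂ,
        ∑ i, lam i / (t + lam i) * ‖T.mulVec x i‖ ^ 2 ≤
          ∑ i, lam i / (t + lam i) * ‖x i‖ ^ 2 := by
    intro k
    obtain ⟨hk, hkne⟩ := hsg k
    have hsq : ∀ i, ‖x₀ i‖ ^ 2 < ‖xs (s k) i‖ ^ 2 := fun i => by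
      rw [hxs _ hk]
      exact pow_lt_pow_left₀ (by linarith) (norm_nonneg _) two_ne_zero
    refine exists_contraction_of_strict hpos hmono.injective hkne ?_ fun t ht => ?_
    · refine (weighted_sum_nonneg hK).trans_lt (Finset.sum_lt_sum_of_nonempty
        Finset.univ_nonempty fun i _ => mul_lt_mul_of_pos_left ?_ (hpos i))
      linarith [hsq i]
    · refine (hK t ht).trans (Finset.sum_le_sum fun i _ => mul_le_mul_of_nonneg_left (hsq i).le ?_)
      have := hpos i
      positivity
  choose T hTx hTc using hex
  -- The exact contractions `T k` lie in a fixed compact box, so a limit point serves `x₀` itself.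
  have hcpt : IsCompact (Set.univ.pi fun i : Fin n => Set.univ.pi fun _ : Fin n =>
      Metric.closedBall (0 : ℂ) ((1 + lam i) / lam i)) :=
    isCompact_univ_pi fun i => isCompact_univ_pi fun _ => isCompact_closedBall _ _
  obtain ⟨S, -, φ, hφ, hlim'⟩ := IsCompact.tendsto_subseq (X := Fin n → Fin n → ℂ) hcpt
    (x := fun k i j => T k i j) fun k i _ j _ => by simpa using contraction_entry_le hpos (hTc k) i j
  have hlim : Filter.Tendsto (fun k => T (φ k)) Filter.atTop
      (nhds (S : Matrix (Fin n) (Fin n) ℂ)) := hlim'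
  have hcont : Continuous fun q : Matrix (Fin n) (Fin n) ℂ × (Fin n → ℂ) => q.1.mulVec q.2 :=
    continuous_fst.matrix_mulVec continuous_snd
  have hxlim : Filter.Tendsto (fun k => xs (s (φ k))) Filter.atTop (nhds x₀) := by
    have hc : Continuous xs := by fun_prop
    have h0 : xs 0 = x₀ := by ext i; simp [xs]
    have := (hc.tendsto 0).comp ((tendsto_nhds_of_tendsto_nhdsWithin hs).comp hφ.tendsto_atTop)
    rwa [h0] at this
  refine ⟨S, ?_, fun t ht x => ?_⟩
  · have h1 := (hcont.tendsto (S, x₀)).comp (hlim.prodMk_nhds hxlim)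
    refine tendsto_nhds_unique h1 (tendsto_const_nhds.congr fun k => ?_)
    exact (hTx (φ k)).symm
  · have hc : Continuous fun M : Matrix (Fin n) (Fin n) ℂ =>
        ∑ i, lam i / (t + lam i) * ‖M.mulVec x i‖ ^ 2 := by
      refine continuous_finsetSum _ fun i _ => continuous_const.mul (Continuous.pow ?_ 2)
      exact ((continuous_apply i).comp
        (hcont.comp (continuous_id.prodMk continuous_const))).norm
    exact le_of_tendsto' ((hc.tendsto S).comp hlim) fun k => hTc (φ k) t ht x
end

section
/- Let 0 < λ₁ < ⋯ < λₙ be distinct positive reals, let A = diag(λ₁, …, λₙ), and let h : (0,∞) → (0,∞). Then B = diag(h(λ₁), …, h(λₙ)) is an exact interpolation matrix for A (i.e., for every T ∈ Mₙ(ℂ), TᴴT ≤ I and TᴴAT ≤ A imply TᴴBT ≤ B) if and only if there exist a constant c ≥ 0 and a finite positive Borel measure ρ on [0,∞) such that h(λᵢ) = c + ∫_{[0,∞)} (1+t)λᵢ/(1+tλᵢ) dρ(t) for every i = 1, …, n. -/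
/-!
Write `K_τ(λ) = λ / (τ + λ)`. Up to positive factors, the kernels `(1 + t) λ / (1 + t λ)` and the
constant `1` are the `K_τ`, with the constant and the function `λ` as the limits `τ → 0` and
`τ → ∞`.

*Sufficiency.* For `t > 0`, `∑ λᵢ / (1 + t λᵢ) |vᵢ|²` is the minimum over decompositions
`v = a + b` of `∑ λᵢ |aᵢ|² + t⁻¹ ∑ |bᵢ|²`. Both summands decrease under an admissible `T`, hence so
does the minimum (`kernel_contraction`); integrating in `t` gives the claim (`isExact_of_pick`).

*Necessity.* If the vector `b = (h(λᵢ))` is outside the cone of restrictions of `P′` functions, it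
is strictly separated from a compact convex base of that cone, which gives `u` with `∑ bᵢ uᵢ < 0`
and `∑ uᵢ K_τ(λᵢ) ≥ 0` for all `τ ≥ 0` (`mem_pickCone`). This is contradicted in two steps.

* Take `T = (1 + s G)⁻¹` for `s > 0`, with `G` real. It is admissible as soon as the symmetric
  matrices `G + Gᵀ` and `A G + Gᵀ A` are positive semidefinite. For these to equal `x xᵀ` and `y yᵀ`
  one needs exactly `yᵢ² = λᵢ xᵢ²`, and then `G = generator lam x y` is determined by `x` and `y`.
  Testing `Tᴴ B T ≤ B` on `(1 + s G) 1` and letting `s → 0` yields `∑ᵢ bᵢ ∑ⱼ Gᵢⱼ ≥ 0`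
  (`sum_generator_nonneg`).
* For `b = K_τ` that same functional is half of `τ (∑ yᵢ/(τ+λᵢ))² + (∑ λᵢxᵢ/(τ+λᵢ))²`
  (`generator_kernel`). Put `L = ∏ (X + λⱼ)` and `P = L ∑ uᵢ λᵢ / (X + λᵢ)`. Then `P L` is
  nonnegative on `[0, ∞)`, so `P L = q² + X r²` (`exists_sq_add_X_mul_sq`), with `q` and `r` of
  degree less than `n`. Partial fractions of `q / L` and `r / L` produce `x` and `y`; the relation
  `yᵢ² = λᵢ xᵢ²` is the vanishing of `P L` at `-λᵢ`. Since the `K_τ` separate functionals on `ℝⁿ`,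
  `uᵢ = 2 ∑ⱼ Gᵢⱼ`, and therefore `∑ bᵢ uᵢ ≥ 0` (`dual_nonneg`).
-/


open Matrix MeasureTheory
open scoped ComplexOrder

/-- Loewner order on complex `n × n` matrices: `LoewnerLE A B` iff `B - A` is
positive semidefinite (i.e. `A ≤ B`). -/
def LoewnerLE {n : ℕ} (A B : Matrix (Fin n) (Fin n) ℂ) : Prop := (B - A).PosSemidef

/-- Functional calculus for Hermitian matrices: apply `h : ℝ → ℝ` to each eigenvalue
in a spectral decomposition of `A` (junk value `0` for non-Hermitian input). -/
noncomputable def matFunCalc {n : ℕ} (h : ℝ → ℝ) (A : Matrix (Fin n) (Fin n) ℂ) :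
    Matrix (Fin n) (Fin n) ℂ :=
  if hA : A.IsHermitian then
    (hA.eigenvectorUnitary : Matrix (Fin n) (Fin n) ℂ) *
      diagonal (fun i => (h (hA.eigenvalues i) : ℂ)) *
      star (hA.eigenvectorUnitary : Matrix (Fin n) (Fin n) ℂ)
  else 0

/-! ### Polynomials nonnegative on a half-line -/

section Poly
open Polynomial

/-- Brahmagupta's identity: the form `q² + X r²` is multiplicative. -/
lemma mul_sq_add_X_mul_sq {p₁ p₂ : ℝ[X]} (h₁ : ∃ q r : ℝ[X], p₁ = q ^ 2 + X * r ^ 2)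
    (h₂ : ∃ q r : ℝ[X], p₂ = q ^ 2 + X * r ^ 2) :
    ∃ q r : ℝ[X], p₁ * p₂ = q ^ 2 + X * r ^ 2 := by
  obtain ⟨a, b, rfl⟩ := h₁
  obtain ⟨c, d, rfl⟩ := h₂
  exact ⟨a * c + X * b * d, a * d - b * c, by ring⟩

lemma eval_nonneg_of_forall_gt {p : ℝ[X]} {a : ℝ} (hp : ∀ x, a < x → 0 ≤ p.eval x) :
    0 ≤ p.eval a := by
  have hcl : IsClosed {x : ℝ | 0 ≤ p.eval x} := isClosed_le continuous_const p.continuous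
  have : closure (Set.Ioi a) ⊆ {x : ℝ | 0 ≤ p.eval x} := hcl.closure_subset_iff.2 hp
  rw [closure_Ioi] at this
  exact this (Set.mem_Ici.2 le_rfl)

/-- A real polynomial that is nonnegative on `[0, ∞)` is of the form `q² + X r²`. A complex root
splits off a factor that is itself of this form and whose cofactor is nonnegative on `[0, ∞)`. -/
lemma exists_sq_add_X_mul_sq (p : ℝ[X]) (hp : ∀ x, 0 ≤ x → 0 ≤ p.eval x) :
    ∃ q r : ℝ[X], p = q ^ 2 + X * r ^ 2 := by
  induction hd : p.natDegree using Nat.strong_induction_on generalizing p with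
  | _ d ih =>
  subst hd
  rcases Nat.eq_zero_or_pos p.natDegree with h0 | h0
  · obtain ⟨c, rfl⟩ := natDegree_eq_zero.1 h0
    have hc : 0 ≤ c := by simpa using hp 0 le_rfl
    exact ⟨C √c, 0, by rw [← C_pow, Real.sq_sqrt hc]; ring⟩
  have hp0 : p ≠ 0 := by rintro rfl; simp at h0
  have key : ∀ f g : ℝ[X], p = f * g → 0 < f.natDegree →
      (∃ q r : ℝ[X], f = q ^ 2 + X * r ^ 2) → (∀ x, 0 ≤ x → 0 ≤ g.eval x) →
      ∃ q r : ℝ[X], p = q ^ 2 + X * r ^ 2 := by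
    intro f g hfg hf hq hg
    have hne := hp0
    rw [hfg] at hne
    have hdeg : p.natDegree = f.natDegree + g.natDegree := by
      rw [hfg, natDegree_mul (left_ne_zero_of_mul hne) (right_ne_zero_of_mul hne)]
    rw [hfg]
    exact mul_sq_add_X_mul_sq hq (ih g.natDegree (by omega) g hg rfl)
  obtain ⟨z, hz⟩ := IsAlgClosed.exists_aeval_eq_zero ℂ p
    (by rw [degree_eq_natDegree hp0]; exact_mod_cast h0.ne')
  by_cases him : z.im = 0
  · have hroot : p.IsRoot z.re := by
      have hz' : z = algebraMap ℝ ℂ z.re := by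
        apply Complex.ext <;> simp [him]
      rw [hz', aeval_algebraMap_apply] at hz
      simpa using hz
    obtain ⟨g, hg⟩ := dvd_iff_isRoot.2 hroot
    have hge : ∀ x, p.eval x = (x - z.re) * g.eval x := fun x => by rw [hg]; simp
    have hgt : ∀ x, 0 ≤ x → z.re < x → 0 ≤ g.eval x := fun x hx hzx => by
      have := hp x hx
      rw [hge] at this
      exact nonneg_of_mul_nonneg_right this (by linarith)
    rcases le_or_gt z.re 0 with hr | hr
    · refine key _ g hg (by simp) ⟨C √(-z.re), 1, ?_⟩ fun x hx => ?_
      · rw [← C_pow, Real.sq_sqrt (by linarith), C_neg]; ring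
      · exact eval_nonneg_of_forall_gt fun y hy => hgt y (by linarith) (by linarith)
    · -- The cofactor changes sign at an interior root, which is therefore a double root.
      have h1 : 0 ≤ g.eval z.re :=
        eval_nonneg_of_forall_gt fun y hy => hgt y (by linarith) hy
      have h2 : g.eval z.re ≤ 0 := by
        have hcl : IsClosed {x : ℝ | g.eval x ≤ 0} := isClosed_le g.continuous continuous_const
        have : closure (Set.Ioo 0 z.re) ⊆ {x : ℝ | g.eval x ≤ 0} := by
          refine hcl.closure_subset_iff.2 fun x hx => ?_
          have h3 := hp x hx.1.le
          rw [hge] at h3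
          exact nonpos_of_mul_nonneg_right h3 (sub_neg.2 hx.2)
        rw [closure_Ioo hr.ne] at this
        exact this ⟨hr.le, le_rfl⟩
      obtain ⟨k, hk⟩ := dvd_iff_isRoot.2 (show g.IsRoot z.re from le_antisymm h2 h1)
      have hke : ∀ x, 0 ≤ x → x ≠ z.re → 0 ≤ k.eval x := fun x hx hne => by
        have h3 := hp x hx
        rw [hge, hk, eval_mul, eval_sub, eval_X, eval_C, ← mul_assoc] at h3
        exact nonneg_of_mul_nonneg_right h3 (mul_self_pos.2 (sub_ne_zero.2 hne))
      refine key ((X - C z.re) ^ 2) k (by rw [hg, hk]; ring) (by simp) ⟨X - C z.re, 0, by ring⟩ ?_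
      intro x hx
      rcases eq_or_ne x z.re with rfl | hne
      · exact eval_nonneg_of_forall_gt fun y hy => hke y (by linarith) hy.ne'
      · exact hke x hx hne
  · obtain ⟨g, hg⟩ := quadratic_dvd_of_aeval_eq_zero_im_ne_zero p hz him
    have hpos : ∀ x : ℝ, 0 < x ^ 2 - 2 * z.re * x + ‖z‖ ^ 2 := by
      intro x
      have := Complex.sq_norm z
      rw [this, Complex.normSq_apply]
      have : 0 < z.im * z.im := mul_self_pos.2 him
      nlinarith [sq_nonneg (x - z.re)]
    have hle : 0 ≤ 2 * ‖z‖ - 2 * z.re := by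
      have := Complex.re_le_norm z
      linarith
    -- `X² - 2 Re z X + |z|² = (X - |z|)² + 2 (|z| - Re z) X`.
    refine key _ g hg ?_ ⟨X - C ‖z‖, C √(2 * ‖z‖ - 2 * z.re), ?_⟩ fun x hx => ?_
    · have : (X ^ 2 - C (2 * z.re) * X + C (‖z‖ ^ 2)).natDegree = 2 := by compute_degree!
      omega
    · rw [← C_pow, Real.sq_sqrt hle]
      simp only [C_sub, C_mul, C_pow]
      have : (C (2:ℝ)) = (2 : ℝ[X]) := rfl
      rw [this]; ring
    · have := hp x hx
      rw [hg, eval_mul] at this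
      refine nonneg_of_mul_nonneg_right this ?_
      simpa using hpos x

lemma degree_parts_lt {q r : ℝ[X]} {n : ℕ}
    (hn : (q ^ 2 + X * r ^ 2).degree < ((2 * n : ℕ) : WithBot ℕ)) :
    q.degree < (n : WithBot ℕ) ∧ r.degree < (n : WithBot ℕ) := by
  have hq : q ≠ 0 → (q ^ 2).degree = ((2 * q.natDegree : ℕ) : WithBot ℕ) := by
    intro h
    rw [degree_eq_natDegree (pow_ne_zero 2 h), natDegree_pow]
  have hr : r ≠ 0 → (X * r ^ 2).degree = ((1 + 2 * r.natDegree : ℕ) : WithBot ℕ) := by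
    intro h
    rw [degree_eq_natDegree (mul_ne_zero X_ne_zero (pow_ne_zero 2 h)),
      natDegree_mul X_ne_zero (pow_ne_zero 2 h), natDegree_pow, natDegree_X]
  rcases eq_or_ne q 0 with rfl | hq0
  · rcases eq_or_ne r 0 with rfl | hr0
    · simp
    · have : (X * r ^ 2).degree < ((2 * n : ℕ) : WithBot ℕ) := by simpa using hn
      rw [hr hr0, Nat.cast_lt] at this
      rw [degree_eq_natDegree hr0, Nat.cast_lt]
      exact ⟨by simp, by omega⟩
  · rcases eq_or_ne r 0 with rfl | hr0
    · have : (q ^ 2).degree < ((2 * n : ℕ) : WithBot ℕ) := by simpa using hn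
      rw [hq hq0, Nat.cast_lt] at this
      rw [degree_eq_natDegree hq0, Nat.cast_lt]
      exact ⟨by omega, by simp⟩
    · -- The two summands have degrees of opposite parity, so their leading terms cannot cancel.
      have hne : 2 * q.natDegree ≠ 1 + 2 * r.natDegree := by omega
      rw [degree_eq_natDegree hr0, degree_eq_natDegree hq0, Nat.cast_lt, Nat.cast_lt]
      rcases lt_or_gt_of_ne hne with hlt | hlt
      · rw [degree_add_eq_right_of_degree_lt (by rwa [hq hq0, hr hr0, Nat.cast_lt]), hr hr0,
          Nat.cast_lt] at hn
        omega
      · rw [degree_add_eq_left_of_degree_lt (by rwa [hq hq0, hr hr0, Nat.cast_lt]), hq hq0,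
          Nat.cast_lt] at hn
        omega
end Poly

/-! ### Loewner inequalities as inequalities of quadratic forms -/

lemma loewnerLE_diagonal_iff {n : ℕ} (d : Fin n → ℝ) (T : Matrix (Fin n) (Fin n) ℂ) :
    LoewnerLE (Tᴴ * diagonal (fun i => (d i : ℂ)) * T) (diagonal (fun i => (d i : ℂ))) ↔
      ∀ v : Fin n → ℂ, ∑ i, d i * Complex.normSq ((T *ᵥ v) i) ≤ ∑ i, d i * Complex.normSq (v i) := by
  have hd : ∀ w : Fin n → ℂ, star w ⬝ᵥ (diagonal (fun i => (d i : ℂ)) *ᵥ w) =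
      ((∑ i, d i * Complex.normSq (w i) : ℝ) : ℂ) := by
    intro w
    rw [dotProduct, Complex.ofReal_sum]
    refine Finset.sum_congr rfl fun i _ => ?_
    rw [mulVec_diagonal, Complex.ofReal_mul, Complex.normSq_eq_conj_mul_self, Pi.star_apply,
      starRingEnd_apply]
    ring
  have hform : ∀ v : Fin n → ℂ, star v ⬝ᵥ ((diagonal (fun i => (d i : ℂ)) -
      Tᴴ * diagonal (fun i => (d i : ℂ)) * T) *ᵥ v) =
      ((∑ i, d i * Complex.normSq (v i) - ∑ i, d i * Complex.normSq ((T *ᵥ v) i) : ℝ) : ℂ) := by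
    intro v
    rw [sub_mulVec, dotProduct_sub, hd, Complex.ofReal_sub, ← hd (T *ᵥ v), star_mulVec,
      ← mulVec_mulVec, ← mulVec_mulVec, dotProduct_mulVec (star v)]
  have hherm : (diagonal (fun i => (d i : ℂ))).IsHermitian := by
    rw [isHermitian_diagonal_iff]
    intro i
    exact Complex.conj_ofReal _
  rw [LoewnerLE, posSemidef_iff_dotProduct_mulVec]
  constructor
  · rintro ⟨-, h⟩ v
    have := h v
    rw [hform, Complex.zero_le_real] at this
    linarith
  · refine fun h => ⟨hherm.sub (isHermitian_conjTranspose_mul_mul T hherm), fun v => ?_⟩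
    rw [hform, Complex.zero_le_real]
    linarith [h v]

lemma loewnerLE_one_iff {n : ℕ} (T : Matrix (Fin n) (Fin n) ℂ) :
    LoewnerLE (Tᴴ * T) 1 ↔
      ∀ v : Fin n → ℂ, ∑ i, Complex.normSq ((T *ᵥ v) i) ≤ ∑ i, Complex.normSq (v i) := by
  simpa using loewnerLE_diagonal_iff (fun _ => (1 : ℝ)) T

/-- `diagonal b` is an exact interpolation matrix for `diagonal lam`, with every Loewner inequality
spelled out as an inequality of quadratic forms. -/
def IsExact {n : ℕ} (lam b : Fin n → ℝ) : Prop :=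
  ∀ T : Matrix (Fin n) (Fin n) ℂ,
    (∀ v : Fin n → ℂ, ∑ i, Complex.normSq ((T *ᵥ v) i) ≤ ∑ i, Complex.normSq (v i)) →
    (∀ v : Fin n → ℂ, ∑ i, lam i * Complex.normSq ((T *ᵥ v) i) ≤
      ∑ i, lam i * Complex.normSq (v i)) →
    ∀ v : Fin n → ℂ, ∑ i, b i * Complex.normSq ((T *ᵥ v) i) ≤ ∑ i, b i * Complex.normSq (v i)

/-! ### Restrictions of `P′` functions are exact -/

/-- The kernel `(1 + t) l / (1 + t l)` of the integral representation of class `P′`. -/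
noncomputable def pickKernel (l t : ℝ) : ℝ := ((1 + t) * l) / (1 + t * l)

lemma integrableOn_pickKernel {l : ℝ} (hl : 0 < l) (ρ : Measure ℝ) [IsFiniteMeasure ρ] :
    IntegrableOn (pickKernel l) (Set.Ici 0) ρ := by
  refine Measure.integrableOn_of_bounded (M := 1 + l) (measure_ne_top _ _) ?_ ?_
  · have : Measurable (pickKernel l) := by unfold pickKernel; fun_prop
    exact this.aestronglyMeasurable
  · refine (ae_restrict_mem measurableSet_Ici).mono fun t ht => ?_
    have ht : 0 ≤ t := ht
    have h1 : 0 < 1 + t * l := by positivity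
    unfold pickKernel
    rw [Real.norm_of_nonneg (by positivity), div_le_iff₀ h1]
    nlinarith [mul_nonneg ht hl.le, mul_nonneg (mul_nonneg ht hl.le) hl.le]

/-- The scalar form of the variational bound: `l / (1 + τ l)` is the parallel sum of `l` and `τ⁻¹`. -/
lemma normSq_add_le_kernel {l τ : ℝ} (hl : 0 < l) (ht : 0 < τ) (a b : ℂ) :
    l / (1 + τ * l) * Complex.normSq (a + b) ≤
      l * Complex.normSq a + τ⁻¹ * Complex.normSq b := by
  have h1 : 0 < 1 + τ * l := by positivity
  rw [← sub_nonneg]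
  have : l * Complex.normSq a + τ⁻¹ * Complex.normSq b - l / (1 + τ * l) * Complex.normSq (a + b)
      = ((τ * l * a.re - b.re) ^ 2 + (τ * l * a.im - b.im) ^ 2) / (τ * (1 + τ * l)) := by
    simp only [Complex.normSq_apply, Complex.add_re, Complex.add_im]
    field_simp
    ring
  rw [this]
  positivity

/-- An admissible `T` contracts every kernel form, because it contracts both terms of the variational
formula `min_{v = a + b} (∑ λᵢ |aᵢ|² + t⁻¹ ∑ |bᵢ|²)`. -/
lemma kernel_contraction {n : ℕ} {lam : Fin n → ℝ} (hpos : ∀ i, 0 < lam i)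
    {T : Matrix (Fin n) (Fin n) ℂ}
    (h1 : ∀ v : Fin n → ℂ, ∑ i, Complex.normSq ((T *ᵥ v) i) ≤ ∑ i, Complex.normSq (v i))
    (h2 : ∀ v : Fin n → ℂ, ∑ i, lam i * Complex.normSq ((T *ᵥ v) i) ≤
      ∑ i, lam i * Complex.normSq (v i)) {t : ℝ} (ht : 0 ≤ t) (v : Fin n → ℂ) :
    ∑ i, pickKernel (lam i) t * Complex.normSq ((T *ᵥ v) i) ≤
      ∑ i, pickKernel (lam i) t * Complex.normSq (v i) := by
  have hk : ∀ i, pickKernel (lam i) t = (1 + t) * (lam i / (1 + t * lam i)) :=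
    fun i => by rw [pickKernel, mul_div_assoc]
  rcases ht.eq_or_lt with rfl | ht
  · simpa [pickKernel] using h2 v
  simp_rw [hk, mul_assoc, ← Finset.mul_sum]
  refine mul_le_mul_of_nonneg_left ?_ (by positivity)
  -- `v = a + b` is the minimizing decomposition.
  let a : Fin n → ℂ := fun i => ((1 / (1 + t * lam i) : ℝ) : ℂ) * v i
  let b : Fin n → ℂ := fun i => ((t * lam i / (1 + t * lam i) : ℝ) : ℂ) * v i
  have hne : ∀ i, 1 + t * lam i ≠ 0 := fun i => by have := hpos i; positivity
  have hab : v = a + b := by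
    funext i
    simp only [a, b, Pi.add_apply]
    rw [← add_mul, ← Complex.ofReal_add, ← add_div, div_self (hne i)]
    simp
  calc ∑ i, lam i / (1 + t * lam i) * Complex.normSq ((T *ᵥ v) i)
      ≤ ∑ i, (lam i * Complex.normSq ((T *ᵥ a) i) + t⁻¹ * Complex.normSq ((T *ᵥ b) i)) := by
        refine Finset.sum_le_sum fun i _ => ?_
        have := normSq_add_le_kernel (hpos i) ht ((T *ᵥ a) i) ((T *ᵥ b) i)
        rwa [← Pi.add_apply, ← mulVec_add, ← hab] at this
    _ ≤ ∑ i, (lam i * Complex.normSq (a i) + t⁻¹ * Complex.normSq (b i)) := by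
        rw [Finset.sum_add_distrib, Finset.sum_add_distrib, ← Finset.mul_sum, ← Finset.mul_sum]
        exact add_le_add (h2 a) (mul_le_mul_of_nonneg_left (h1 b) (by positivity))
    _ = ∑ i, lam i / (1 + t * lam i) * Complex.normSq (v i) := by
        refine Finset.sum_congr rfl fun i _ => ?_
        have := hne i
        simp only [a, b, Complex.normSq_mul, Complex.normSq_ofReal]
        field_simp

lemma isExact_of_pick {n : ℕ} {lam : Fin n → ℝ} (hpos : ∀ i, 0 < lam i) {b : Fin n → ℝ}
    {c : ℝ} (hc : 0 ≤ c) (ρ : Measure ℝ) [IsFiniteMeasure ρ]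
    (hb : ∀ i, b i = c + ∫ t in Set.Ici (0 : ℝ), pickKernel (lam i) t ∂ρ) : IsExact lam b := by
  intro T h1 h2 v
  have hint : ∀ (w : Fin n → ℝ), ∀ i ∈ Finset.univ,
      Integrable (fun t => pickKernel (lam i) t * w i) (ρ.restrict (Set.Ici 0)) :=
    fun w i _ => (integrableOn_pickKernel (hpos i) ρ).mul_const _
  have hsum : ∀ w : Fin n → ℝ, ∑ i, b i * w i =
      c * ∑ i, w i + ∫ t in Set.Ici (0 : ℝ), ∑ i, pickKernel (lam i) t * w i ∂ρ := by
    intro w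
    rw [integral_finsetSum _ (hint w), Finset.mul_sum, ← Finset.sum_add_distrib]
    refine Finset.sum_congr rfl fun i _ => ?_
    rw [hb, integral_mul_const, add_mul]
  rw [hsum (fun i => Complex.normSq ((T *ᵥ v) i)), hsum (fun i => Complex.normSq (v i))]
  refine add_le_add (mul_le_mul_of_nonneg_left (h1 v) hc) ?_
  refine setIntegral_mono_on (integrable_finsetSum _ (hint _)) (integrable_finsetSum _ (hint _))
    measurableSet_Ici fun t ht => kernel_contraction hpos h1 h2 ht v

/-! ### Contractions generated by accretive matrices -/

/-- The real matrix `G` with `G + Gᵀ = x xᵀ` and `A G + Gᵀ A = y yᵀ` for `A = diagonal lam`, when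
`yᵢ² = λᵢ xᵢ²` and the `λᵢ` are distinct: off the diagonal the two equations determine `Gᵢⱼ` and
`Gⱼᵢ`, on the diagonal they both say `2 Gᵢᵢ = xᵢ²`. -/
noncomputable def generator {n : ℕ} (lam x y : Fin n → ℝ) : Matrix (Fin n) (Fin n) ℝ :=
  Matrix.of fun i j =>
    if i = j then x i ^ 2 / 2 else (y i * y j - lam j * (x i * x j)) / (lam i - lam j)

section Gen
variable {n : ℕ} {lam x y : Fin n → ℝ}

lemma generator_add (hinj : Function.Injective lam) (i j : Fin n) :
    generator lam x y i j + generator lam x y j i = x i * x j := by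
  rcases eq_or_ne i j with rfl | hij
  · simp only [generator, of_apply, if_true]; ring
  · have h1 : lam i - lam j ≠ 0 := sub_ne_zero.2 (hinj.ne hij)
    have h2 : lam j - lam i ≠ 0 := sub_ne_zero.2 (hinj.ne hij.symm)
    simp only [generator, of_apply, if_neg hij, if_neg hij.symm]
    rw [← neg_sub (lam i) (lam j), div_neg, ← sub_eq_add_neg, ← sub_div, div_eq_iff h1]
    ring

lemma generator_lam (hinj : Function.Injective lam) (hxy : ∀ i, y i ^ 2 = lam i * x i ^ 2)
    (i j : Fin n) : lam i * generator lam x y i j + lam j * generator lam x y j i = y i * y j := by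
  rcases eq_or_ne i j with rfl | hij
  · simp only [generator, of_apply, if_true]; linear_combination -hxy i
  · have h1 : lam i - lam j ≠ 0 := sub_ne_zero.2 (hinj.ne hij)
    simp only [generator, of_apply, if_neg hij, if_neg hij.symm]
    rw [← neg_sub (lam i) (lam j), div_neg]
    field_simp
    ring

/-- For `d = λ / (τ + λ)` the symmetrization of `diagonal d * G` is a sum of two rank-one positive
matrices. -/
lemma generator_kernel (hinj : Function.Injective lam) (hpos : ∀ i, 0 < lam i)
    (hxy : ∀ i, y i ^ 2 = lam i * x i ^ 2) {τ : ℝ} (hτ : 0 ≤ τ) (i j : Fin n) :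
    lam i / (τ + lam i) * generator lam x y i j + lam j / (τ + lam j) * generator lam x y j i =
      τ * (y i / (τ + lam i) * (y j / (τ + lam j))) +
        lam i * x i / (τ + lam i) * (lam j * x j / (τ + lam j)) := by
  have hi : τ + lam i ≠ 0 := by have := hpos i; positivity
  have hj : τ + lam j ≠ 0 := by have := hpos j; positivity
  rcases eq_or_ne i j with rfl | hij
  · simp only [generator, of_apply, if_true]
    field_simp
    linear_combination -2 * τ * hxy i
  · have h1 : lam i - lam j ≠ 0 := sub_ne_zero.2 (hinj.ne hij)
    simp only [generator, of_apply, if_neg hij, if_neg hij.symm]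
    rw [← neg_sub (lam i) (lam j), div_neg]
    field_simp
    ring

/-- The quadratic form of `diagonal d * G` depends only on the symmetric part `F / 2`. -/
lemma two_mul_sum_sum {d : Fin n → ℝ} {G : Matrix (Fin n) (Fin n) ℝ}
    (F : Fin n → Fin n → ℝ) (h : ∀ i j, d i * G i j + d j * G j i = F i j)
    (a : Fin n → ℝ) :
    2 * ∑ i, d i * ∑ j, G i j * (a i * a j) = ∑ i, ∑ j, F i j * (a i * a j) := by
  have h1 : ∑ i, d i * ∑ j, G i j * (a i * a j) = ∑ i, ∑ j, d j * G j i * (a i * a j) := by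
    rw [Finset.sum_comm]
    refine Finset.sum_congr rfl fun i _ => ?_
    rw [Finset.mul_sum]
    exact Finset.sum_congr rfl fun j _ => by ring
  rw [two_mul]
  nth_rewrite 2 [h1]
  rw [← Finset.sum_add_distrib]
  refine Finset.sum_congr rfl fun i _ => ?_
  rw [Finset.mul_sum, ← Finset.sum_add_distrib]
  refine Finset.sum_congr rfl fun j _ => ?_
  rw [← h]; ring

lemma sum_sum_mul (z w : Fin n → ℝ) : ∑ i, ∑ j, z i * w j = (∑ i, z i) * ∑ j, w j := by
  rw [Finset.sum_mul_sum]

/-- If `d G + Gᵀ d = z zᵀ`, then `diagonal d * G` is accretive on `ℂⁿ`. -/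
lemma re_form_nonneg {d z : Fin n → ℝ} {G : Matrix (Fin n) (Fin n) ℝ}
    (h : ∀ i j, d i * G i j + d j * G j i = z i * z j) (v : Fin n → ℂ) :
    0 ≤ ∑ i, d i * (star (v i) * (G.map Complex.ofReal *ᵥ v) i).re := by
  have hreal : ∀ a : Fin n → ℝ, 0 ≤ ∑ i, d i * ∑ j, G i j * (a i * a j) := by
    intro a
    have h2 := two_mul_sum_sum _ h a
    have h3 : ∑ i, ∑ j, z i * z j * (a i * a j) = (∑ i, z i * a i) ^ 2 := by
      rw [sq, ← sum_sum_mul]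
      exact Finset.sum_congr rfl fun i _ => Finset.sum_congr rfl fun j _ => by ring
    nlinarith [sq_nonneg (∑ i, z i * a i)]
  have hsplit : ∑ i, d i * (star (v i) * (G.map Complex.ofReal *ᵥ v) i).re =
      ∑ i, d i * ∑ j, G i j * ((v i).re * (v j).re) +
        ∑ i, d i * ∑ j, G i j * ((v i).im * (v j).im) := by
    rw [← Finset.sum_add_distrib]
    refine Finset.sum_congr rfl fun i _ => ?_
    rw [← mul_add, ← Finset.sum_add_distrib, mulVec, dotProduct, Finset.mul_sum, Complex.re_sum]
    congr 1
    refine Finset.sum_congr rfl fun j _ => ?_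
    simp
    ring
  rw [hsplit]
  exact add_nonneg (hreal fun i => (v i).re) (hreal fun i => (v i).im)

lemma sum_normSq_add (d : Fin n → ℝ) (v g : Fin n → ℂ) (s : ℝ) :
    ∑ i, d i * Complex.normSq (v i + s * g i) =
      ∑ i, d i * Complex.normSq (v i) + 2 * s * ∑ i, d i * (star (v i) * g i).re +
        s ^ 2 * ∑ i, d i * Complex.normSq (g i) := by
  simp only [Finset.mul_sum, ← Finset.sum_add_distrib]
  refine Finset.sum_congr rfl fun i _ => ?_
  simp [Complex.normSq_apply]
  ring

/-- Exactness tested on the contractions `(1 + s G)⁻¹`, to first order in `s`. -/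
lemma sum_generator_nonneg (hinj : Function.Injective lam) (hpos : ∀ i, 0 < lam i)
    (hxy : ∀ i, y i ^ 2 = lam i * x i ^ 2) {b : Fin n → ℝ} (hb : IsExact lam b) :
    0 ≤ ∑ i, b i * ∑ j, generator lam x y i j := by
  set G := (generator lam x y).map Complex.ofReal with hG
  have hexp : ∀ (d : Fin n → ℝ) (s : ℝ) (v : Fin n → ℂ),
      ∑ i, d i * Complex.normSq (((1 + (s : ℂ) • G) *ᵥ v) i) =
      ∑ i, d i * Complex.normSq (v i) + 2 * s * ∑ i, d i * (star (v i) * (G *ᵥ v) i).re +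
        s ^ 2 * ∑ i, d i * Complex.normSq ((G *ᵥ v) i) := by
    intro d s v
    rw [← sum_normSq_add]
    simp [add_mulVec, smul_mulVec]
  have hexpand : ∀ (d z : Fin n → ℝ), (∀ i, 0 ≤ d i) →
      (∀ i j, d i * generator lam x y i j + d j * generator lam x y j i = z i * z j) →
      ∀ s : ℝ, 0 ≤ s → ∀ v : Fin n → ℂ,
      ∑ i, d i * Complex.normSq (v i) ≤
        ∑ i, d i * Complex.normSq (((1 + (s : ℂ) • G) *ᵥ v) i) := by
    intro d z hd hz s hs v
    rw [hexp, add_assoc]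
    refine le_add_of_nonneg_right (add_nonneg ?_ ?_)
    · exact mul_nonneg (by positivity) (re_form_nonneg hz v)
    · exact mul_nonneg (by positivity)
        (Finset.sum_nonneg fun i _ => mul_nonneg (hd i) (Complex.normSq_nonneg _))
  have hone : ∀ s : ℝ, 0 ≤ s → ∀ v : Fin n → ℂ, ∑ i, Complex.normSq (v i) ≤
      ∑ i, Complex.normSq (((1 + (s : ℂ) • G) *ᵥ v) i) := by
    intro s hs v
    simpa using hexpand (fun _ => 1) x (fun _ => zero_le_one)
      (by simpa using generator_add hinj) s hs v
  have hlam := hexpand lam y (fun i => (hpos i).le) (generator_lam hinj hxy)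
  have hmain : ∀ s : ℝ, 0 < s →
      0 ≤ 2 * (∑ i, b i * ∑ j, generator lam x y i j) +
        s * ∑ i, b i * Complex.normSq ((G *ᵥ fun _ => 1) i) := by
    intro s hs
    set S := 1 + (s : ℂ) • G with hS
    have hunit : IsUnit S := by
      rw [← mulVec_injective_iff_isUnit]
      refine (injective_iff_map_eq_zero (Matrix.mulVecLin S)).2 fun v hv => ?_
      have hv : S *ᵥ v = 0 := hv
      have h0 : ∑ i, Complex.normSq (v i) ≤ 0 := by
        have := hone s hs.le v
        rw [hv] at this
        simpa using this
      have h1 := (Finset.sum_eq_zero_iff_of_nonneg fun i _ => Complex.normSq_nonneg (v i)).1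
        (le_antisymm h0 (Finset.sum_nonneg fun i _ => Complex.normSq_nonneg (v i)))
      funext i
      exact Complex.normSq_eq_zero.1 (h1 i (Finset.mem_univ i))
    have hdet : IsUnit S.det := (Matrix.isUnit_iff_isUnit_det S).1 hunit
    have hST : ∀ v, S *ᵥ (S⁻¹ *ᵥ v) = v := fun v => by
      rw [mulVec_mulVec, mul_nonsing_inv _ hdet, one_mulVec]
    have hTS : ∀ v, S⁻¹ *ᵥ (S *ᵥ v) = v := fun v => by
      rw [mulVec_mulVec, nonsing_inv_mul _ hdet, one_mulVec]
    have h := hb S⁻¹ (fun v => by simpa only [← hS, hST] using hone s hs.le (S⁻¹ *ᵥ v))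
      (fun v => by simpa only [← hS, hST] using hlam s hs.le (S⁻¹ *ᵥ v)) (S *ᵥ fun _ => 1)
    rw [hTS, hS, hexp] at h
    have hre : ∀ i, (star (1 : ℂ) * (G *ᵥ fun _ => 1) i).re = ∑ j, generator lam x y i j := by
      intro i
      simp [hG, mulVec, dotProduct]
    simp only [hre] at h
    have hquad : 0 ≤ s * (2 * (∑ i, b i * ∑ j, generator lam x y i j) +
        s * ∑ i, b i * Complex.normSq ((G *ᵥ fun _ => 1) i)) := by linarith
    exact nonneg_of_mul_nonneg_right hquad hs
  -- Let `s → 0` in `hmain`.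
  have hcl : IsClosed {s : ℝ | 0 ≤ 2 * (∑ i, b i * ∑ j, generator lam x y i j) +
        s * ∑ i, b i * Complex.normSq ((G *ᵥ fun _ => 1) i)} :=
    isClosed_le continuous_const (by fun_prop)
  have hsub := hcl.closure_subset_iff.2 (fun s hs => hmain s hs : Set.Ioi (0 : ℝ) ⊆ _)
  rw [closure_Ioi] at hsub
  have := hsub (Set.mem_Ici.2 le_rfl)
  simp only [Set.mem_ofPred_eq, zero_mul, add_zero] at this
  linarith

end Gen

/-! ### Partial fractions and the dual cone -/

section Dual
open Polynomial
variable {n : ℕ} {lam : Fin n → ℝ}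

/-- `∏_{j ≠ i} (X + λⱼ)`, the cofactor of `X + λᵢ` in `∏ⱼ (X + λⱼ)`. -/
noncomputable def nodeCofactor (lam : Fin n → ℝ) (i : Fin n) : ℝ[X] :=
  ∏ j ∈ Finset.univ.erase i, (X + C (lam j))

lemma prod_eq_mul_nodeCofactor (lam : Fin n → ℝ) (i : Fin n) :
    ∏ j, (X + C (lam j)) = (X + C (lam i)) * nodeCofactor lam i :=
  (Finset.mul_prod_erase _ _ (Finset.mem_univ i)).symm

lemma degree_nodeCofactor_lt (lam : Fin n → ℝ) (i : Fin n) :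
    (nodeCofactor lam i).degree < (n : WithBot ℕ) := by
  have hn : 0 < n := i.pos
  rw [nodeCofactor, degree_prod]
  simp only [degree_X_add_C, Finset.sum_const, Finset.card_erase_of_mem (Finset.mem_univ i),
    Finset.card_univ, Fintype.card_fin, nsmul_eq_mul, mul_one, Nat.cast_lt]
  omega

lemma degree_sum_nodeCofactor_lt (lam c : Fin n → ℝ) :
    (∑ i, C (c i) * nodeCofactor lam i).degree < (n : WithBot ℕ) := by
  refine (degree_sum_le _ _).trans_lt ((Finset.sup_lt_iff (WithBot.bot_lt_coe n)).2 fun i _ => ?_)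
  refine lt_of_le_of_lt ?_ (degree_nodeCofactor_lt lam i)
  rw [degree_mul]
  calc (C (c i)).degree + (nodeCofactor lam i).degree ≤ 0 + (nodeCofactor lam i).degree := by
        gcongr
        exact degree_C_le
    _ = _ := zero_add _

lemma eval_nodeCofactor_ne (hinj : Function.Injective lam) (i : Fin n) :
    (nodeCofactor lam i).eval (-lam i) ≠ 0 := by
  rw [nodeCofactor, eval_prod, Finset.prod_ne_zero_iff]
  intro j hj h
  simp only [eval_add, eval_X, eval_C] at h
  exact (Finset.ne_of_mem_erase hj) (hinj (by linarith))

lemma eval_sum_nodeCofactor_node (lam c : Fin n → ℝ) (i : Fin n) :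
    (∑ j, C (c j) * nodeCofactor lam j).eval (-lam i) =
      c i * (nodeCofactor lam i).eval (-lam i) := by
  rw [eval_finsetSum, Finset.sum_eq_single i]
  · simp
  · intro j _ hj
    rw [eval_mul, nodeCofactor, eval_prod,
      Finset.prod_eq_zero (Finset.mem_erase.2 ⟨hj.symm, Finset.mem_univ i⟩) (by simp), mul_zero]
  · simp

lemma eval_sum_nodeCofactor (hpos : ∀ i, 0 < lam i) (c : Fin n → ℝ) {τ : ℝ} (hτ : 0 ≤ τ) :
    (∑ j, C (c j) * nodeCofactor lam j).eval τ =
      (∏ j, (X + C (lam j))).eval τ * ∑ j, c j / (τ + lam j) := by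
  rw [eval_finsetSum, Finset.mul_sum]
  refine Finset.sum_congr rfl fun i _ => ?_
  have : τ + lam i ≠ 0 := by have := hpos i; positivity
  rw [prod_eq_mul_nodeCofactor lam i]
  simp only [eval_mul, eval_add, eval_X, eval_C]
  field_simp

lemma eval_prod_pos (hpos : ∀ i, 0 < lam i) {τ : ℝ} (hτ : 0 ≤ τ) :
    0 < (∏ j, (X + C (lam j))).eval τ := by
  rw [eval_prod]
  refine Finset.prod_pos fun i _ => ?_
  have := hpos i
  simp only [eval_add, eval_X, eval_C]
  positivity

/-- Partial fractions of `q / ∏ⱼ (X + λⱼ)`, with the denominator cleared. -/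
lemma exists_eq_sum_nodeCofactor (hinj : Function.Injective lam) {q : ℝ[X]}
    (hq : q.degree < (n : WithBot ℕ)) :
    ∃ c : Fin n → ℝ, q = ∑ i, C (c i) * nodeCofactor lam i := by
  refine ⟨fun i => q.eval (-lam i) / (nodeCofactor lam i).eval (-lam i), ?_⟩
  refine eq_of_degrees_lt_of_eval_index_eq (s := Finset.univ) (v := fun i => -lam i)
    (fun i _ j _ h => hinj (neg_injective h)) (by simpa using hq)
    (by simpa using degree_sum_nodeCofactor_lt lam _) fun i _ => ?_
  rw [eval_sum_nodeCofactor_node, div_mul_cancel₀ _ (eval_nodeCofactor_ne hinj i)]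

/-- An exact `b` pairs nonnegatively with every functional `u` that is nonnegative on all the kernels
`λ / (τ + λ)`. -/
lemma dual_nonneg (hinj : Function.Injective lam) (hpos : ∀ i, 0 < lam i) {b : Fin n → ℝ}
    (hb : IsExact lam b) {u : Fin n → ℝ}
    (hu : ∀ τ : ℝ, 0 ≤ τ → 0 ≤ ∑ i, u i * lam i / (τ + lam i)) :
    0 ≤ ∑ i, b i * u i := by
  set L : ℝ[X] := ∏ j, (X + C (lam j)) with hL
  have hLnode : ∀ i, L.eval (-lam i) = 0 := fun i => by
    rw [hL, prod_eq_mul_nodeCofactor lam i]; simp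
  set P : ℝ[X] := ∑ i, C (u i * lam i) * nodeCofactor lam i with hP
  obtain ⟨q, r, hqr⟩ := exists_sq_add_X_mul_sq (P * L) fun τ hτ => by
    rw [eval_mul, hP, eval_sum_nodeCofactor hpos _ hτ]
    have := eval_prod_pos hpos hτ
    exact mul_nonneg (mul_nonneg this.le (hu τ hτ)) this.le
  have hLdeg : L.degree = (n : WithBot ℕ) := by
    rw [hL, degree_prod]
    simp
  have hPL : (q ^ 2 + X * r ^ 2).degree < ((2 * n : ℕ) : WithBot ℕ) := by
    have hPd := degree_sum_nodeCofactor_lt lam fun i => u i * lam i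
    rw [← hqr, degree_mul, hLdeg, two_mul, Nat.cast_add]
    exact WithBot.add_lt_add_right (WithBot.coe_ne_bot) hPd
  obtain ⟨hqd, hrd⟩ := degree_parts_lt hPL
  obtain ⟨c, hc⟩ := exists_eq_sum_nodeCofactor hinj hqd
  obtain ⟨y, hy⟩ := exists_eq_sum_nodeCofactor hinj hrd
  -- `P L` vanishes at `-λᵢ`.
  have hcy : ∀ i, c i ^ 2 = lam i * y i ^ 2 := by
    intro i
    have h := congrArg (eval (-lam i)) hqr
    rw [eval_mul, hLnode, mul_zero, eval_add, eval_mul, eval_pow, eval_pow, eval_X, hc, hy,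
      eval_sum_nodeCofactor_node, eval_sum_nodeCofactor_node] at h
    have hne := pow_ne_zero 2 (eval_nodeCofactor_ne hinj i)
    refine mul_right_cancel₀ hne ?_
    linear_combination -h
  set x : Fin n → ℝ := fun i => c i / lam i with hx
  have hlx : ∀ i, lam i * x i = c i := fun i => mul_div_cancel₀ _ (hpos i).ne'
  have hxy : ∀ i, y i ^ 2 = lam i * x i ^ 2 := by
    intro i
    have := (hpos i).ne'
    simp only [hx, div_pow, hcy]
    field_simp
  -- Both functionals agree on every `λ / (τ + λ)`, and these span `ℝⁿ`.
  have hU : ∀ i, 2 * ∑ j, generator lam x y i j = u i := by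
    set U : Fin n → ℝ := fun i => 2 * ∑ j, generator lam x y i j with hUdef
    have heq : ∀ τ : ℝ, 0 ≤ τ →
        ∑ i, U i * lam i / (τ + lam i) = ∑ i, u i * lam i / (τ + lam i) := by
      intro τ hτ
      have h1 := two_mul_sum_sum _ (generator_kernel hinj hpos hxy hτ) (fun _ => 1)
      simp only [mul_one, Finset.sum_add_distrib, hlx, ← Finset.mul_sum, ← Finset.sum_mul] at h1
      have h2 : ∑ i, U i * lam i / (τ + lam i) =
          2 * ∑ i, lam i / (τ + lam i) * ∑ j, generator lam x y i j := by
        rw [Finset.mul_sum]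
        exact Finset.sum_congr rfl fun i _ => by simp only [hUdef]; ring
      have h3 := congrArg (eval τ) hqr
      rw [eval_mul, eval_add, eval_mul, eval_pow, eval_pow, eval_X, hc, hy, hP,
        eval_sum_nodeCofactor hpos _ hτ, eval_sum_nodeCofactor hpos _ hτ,
        eval_sum_nodeCofactor hpos _ hτ, ← hL] at h3
      have hLp := eval_prod_pos hpos hτ
      rw [← hL] at hLp
      refine mul_left_cancel₀ (pow_ne_zero 2 hLp.ne') ?_
      rw [h2, h1]
      linear_combination -h3
    have hD : ∑ i, C ((U i - u i) * lam i) * nodeCofactor lam i = 0 := by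
      refine eq_zero_of_infinite_isRoot _ ((Set.Ici_infinite (0 : ℝ)).mono fun τ hτ => ?_)
      have hτ : 0 ≤ τ := hτ
      change eval τ _ = 0
      rw [eval_sum_nodeCofactor hpos _ hτ]
      have : ∑ i, (U i - u i) * lam i / (τ + lam i) = 0 := by
        rw [← sub_eq_zero.2 (heq τ hτ), ← Finset.sum_sub_distrib]
        exact Finset.sum_congr rfl fun i _ => by ring
      rw [this, mul_zero]
    intro i
    have h := congrArg (eval (-lam i)) hD
    rw [eval_sum_nodeCofactor_node, eval_zero] at h
    have h1 := (mul_eq_zero.1 h).resolve_right (eval_nodeCofactor_ne hinj i)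
    exact sub_eq_zero.1 ((mul_eq_zero.1 h1).resolve_right (hpos i).ne')
  have hfin := sum_generator_nonneg hinj hpos hxy hb
  have : ∑ i, b i * u i = 2 * ∑ i, b i * ∑ j, generator lam x y i j := by
    rw [Finset.mul_sum]
    exact Finset.sum_congr rfl fun i _ => by rw [← hU]; ring
  rw [this]
  positivity

end Dual

/-! ### Separation from the cone of `P′` functions -/

section Sep

/-- By Carathéodory, the convex hull of a compact set in `ℝⁿ` is a continuous image of the product of
a simplex with `n + 1` copies of the set. -/
lemma isCompact_convexHull_pi {n : ℕ} {K : Set (Fin n → ℝ)} (hK : IsCompact K) :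
    IsCompact (convexHull ℝ K) := by
  rcases K.eq_empty_or_nonempty with rfl | ⟨k₀, hk₀⟩
  · simp
  have himage : convexHull ℝ K =
      (fun p : (Fin (n + 1) → ℝ) × (Fin (n + 1) → Fin n → ℝ) => ∑ i, p.1 i • p.2 i) ''
        (stdSimplex ℝ (Fin (n + 1)) ×ˢ Set.univ.pi fun _ => K) := by
    apply Set.Subset.antisymm
    · intro x hx
      obtain ⟨ι, _, z, w, hz, hind, hw, hw1, rfl⟩ := eq_pos_convex_span_of_mem_convexHull hx
      have hcard : Fintype.card ι ≤ Fintype.card (Fin (n + 1)) := by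
        have := hind.card_le_finrank_succ
        have h2 := Submodule.finrank_le (vectorSpan ℝ (Set.range z))
        rw [Module.finrank_fin_fun] at h2
        simp only [Fintype.card_fin]
        omega
      obtain ⟨φ⟩ := Function.Embedding.nonempty_of_card_le hcard
      have hext : ∀ i, Function.extend φ w 0 (φ i) = w i := φ.injective.extend_apply w 0
      have hzero : ∀ k, k ∉ Set.range φ → Function.extend φ w 0 k = 0 := fun k hk =>
        Function.extend_apply' _ _ _ hk
      -- Pad the convex combination to `n + 1` terms with zero weights.
      refine ⟨(Function.extend φ w 0, Function.extend φ z fun _ => k₀), ⟨⟨fun k => ?_, ?_⟩, ?_⟩, ?_⟩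
      · by_cases hk : k ∈ Set.range φ
        · obtain ⟨i, rfl⟩ := hk
          simpa only [hext] using (hw i).le
        · simp only [hzero k hk, le_refl]
      · rw [← hw1]
        exact (Fintype.sum_of_injective φ φ.injective _ _ hzero fun i => (hext i).symm).symm
      · intro k _
        by_cases hk : k ∈ Set.range φ
        · obtain ⟨i, rfl⟩ := hk
          simp only [φ.injective.extend_apply]
          exact hz ⟨i, rfl⟩
        · simpa only [Function.extend_apply' _ _ _ hk] using hk₀
      · refine (Fintype.sum_of_injective φ φ.injective _ _ (fun k hk => ?_) fun i => ?_).symm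
        · simp only [hzero k hk, zero_smul]
        · simp only [hext, φ.injective.extend_apply]
    · rintro _ ⟨⟨w, z⟩, ⟨hw, hz⟩, rfl⟩
      exact (convex_convexHull ℝ K).sum_mem (fun i _ => hw.1 i) hw.2
        fun i _ => subset_convexHull ℝ K (hz i trivial)
  rw [himage]
  exact ((isCompact_stdSimplex ℝ _).prod (isCompact_univ_pi fun _ => hK)).image (by fun_prop)

variable {n : ℕ} {lam : Fin n → ℝ}

/-- The vectors `(g(λᵢ))ᵢ` for `g` of class `P′`. -/
def pickCone (lam : Fin n → ℝ) : Set (Fin n → ℝ) :=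
  {v | ∃ c : ℝ, 0 ≤ c ∧ ∃ ρ : Measure ℝ, IsFiniteMeasure ρ ∧
    ∀ i, v i = c + ∫ t in Set.Ici (0 : ℝ), pickKernel (lam i) t ∂ρ}

lemma pickCone_smul {v : Fin n → ℝ} (hv : v ∈ pickCone lam) {a : ℝ} (ha : 0 ≤ a) :
    a • v ∈ pickCone lam := by
  obtain ⟨c, hc, ρ, hρ, h⟩ := hv
  refine ⟨a * c, mul_nonneg ha hc, a.toNNReal • ρ, inferInstance, fun i => ?_⟩
  rw [Measure.restrict_smul, integral_smul_nnreal_measure, Pi.smul_apply, h, NNReal.smul_def,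
    Real.coe_toNNReal a ha, smul_eq_mul, smul_eq_mul, mul_add]

lemma pickCone_add (hpos : ∀ i, 0 < lam i) {v w : Fin n → ℝ} (hv : v ∈ pickCone lam)
    (hw : w ∈ pickCone lam) : v + w ∈ pickCone lam := by
  obtain ⟨c, hc, ρ, hρ, h⟩ := hv
  obtain ⟨c', hc', ρ', hρ', h'⟩ := hw
  refine ⟨c + c', add_nonneg hc hc', ρ + ρ', inferInstance, fun i => ?_⟩
  rw [Measure.restrict_add, integral_add_measure (integrableOn_pickKernel (hpos i) ρ)
    (integrableOn_pickKernel (hpos i) ρ'), Pi.add_apply, h, h']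
  ring

/-- The kernels reparametrized by `s = t / (1 + t) ∈ [0, 1]`. The value `s = 1` is the limit `t → ∞`,
the constant function `1`. -/
noncomputable def arc (lam : Fin n → ℝ) (s : ℝ) (i : Fin n) : ℝ := lam i / ((1 - s) + s * lam i)

lemma arc_denom_pos (hpos : ∀ i, 0 < lam i) {s : ℝ} (hs : s ∈ Set.Icc (0 : ℝ) 1) (i : Fin n) :
    0 < (1 - s) + s * lam i := by
  have := hpos i
  rcases hs.1.eq_or_lt with rfl | h0
  · simp
  · have := hs.2
    have := mul_pos h0 (hpos i)
    linarith

lemma arc_pos (hpos : ∀ i, 0 < lam i) {s : ℝ} (hs : s ∈ Set.Icc (0 : ℝ) 1) (i : Fin n) :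
    0 < arc lam s i := div_pos (hpos i) (arc_denom_pos hpos hs i)

lemma arc_mem_pickCone (hpos : ∀ i, 0 < lam i) {s : ℝ} (hs : s ∈ Set.Icc (0 : ℝ) 1) :
    arc lam s ∈ pickCone lam := by
  rcases hs.2.eq_or_lt with rfl | h1
  · refine ⟨1, zero_le_one, 0, inferInstance, fun i => ?_⟩
    simp [arc, (hpos i).ne']
  · have h1' : 0 < 1 - s := by linarith
    have ht : 0 ≤ s / (1 - s) := div_nonneg hs.1 h1'.le
    refine ⟨0, le_rfl, Measure.dirac (s / (1 - s)), inferInstance, fun i => ?_⟩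
    rw [restrict_dirac' measurableSet_Ici, if_pos (Set.mem_Ici.2 ht), integral_dirac,
      zero_add, arc, pickKernel]
    have := (arc_denom_pos hpos hs i).ne'
    have h2 : 1 + s / (1 - s) * lam i ≠ 0 := by have := hpos i; positivity
    field_simp
    ring

lemma mem_pickCone (hinj : Function.Injective lam) (hpos : ∀ i, 0 < lam i) {b : Fin n → ℝ}
    (hbpos : ∀ i, 0 < b i) (hb : IsExact lam b) : b ∈ pickCone lam := by
  rcases Nat.eq_zero_or_pos n with rfl | hn
  · exact ⟨0, le_rfl, 0, inferInstance, fun i => i.elim0⟩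
  have : Nonempty (Fin n) := ⟨⟨0, hn⟩⟩
  have hsum : ∀ {v : Fin n → ℝ}, (∀ i, 0 < v i) → 0 < ∑ i, v i := fun h =>
    Finset.sum_pos (fun i _ => h i) Finset.univ_nonempty
  by_contra hcon
  -- The kernels normalized to coordinate sum `1` form a compact base of the cone.
  set K : Set (Fin n → ℝ) := (fun s => (∑ i, arc lam s i)⁻¹ • arc lam s) '' Set.Icc 0 1 with hKdef
  have hK : IsCompact K := by
    refine isCompact_Icc.image_of_continuousOn ?_
    have harc : ∀ i, ContinuousOn (fun s => arc lam s i) (Set.Icc 0 1) := fun i =>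
      continuousOn_const.div (by fun_prop) fun s hs => (arc_denom_pos hpos hs i).ne'
    exact (ContinuousOn.inv₀ (continuousOn_finsetSum _ fun i _ => harc i)
      fun s hs => (hsum (arc_pos hpos hs)).ne').smul (continuousOn_pi.2 harc)
  have hKsub : convexHull ℝ K ⊆ pickCone lam := by
    refine convexHull_min ?_ ?_
    · rintro _ ⟨s, hs, rfl⟩
      exact pickCone_smul (arc_mem_pickCone hpos hs) (inv_nonneg.2 (hsum (arc_pos hpos hs)).le)
    · intro v hv w hw α β hα hβ _
      exact pickCone_add hpos (pickCone_smul hv hα) (pickCone_smul hw hβ)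
  have hφ := hsum hbpos
  have hnot : (∑ i, b i)⁻¹ • b ∉ convexHull ℝ K := fun hmem => hcon <| by
    have := pickCone_smul (hKsub hmem) hφ.le
    rwa [smul_smul, mul_inv_cancel₀ hφ.ne', one_smul] at this
  obtain ⟨f, a, hfb, hfK⟩ := geometric_hahn_banach_point_closed (convex_convexHull ℝ K)
    (isCompact_convexHull_pi hK).isClosed hnot
  set e : Fin n → ℝ := fun i => f fun j => if i = j then 1 else 0 with he
  have hf : ∀ v : Fin n → ℝ, f v = ∑ i, v i * e i := fun v => by
    simpa using LinearMap.pi_apply_eq_sum_univ (f : (Fin n → ℝ) →ₗ[ℝ] ℝ) v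
  have hlin : ∀ v : Fin n → ℝ, ∑ i, v i * (e i - a) = f v - a * ∑ i, v i := fun v => by
    rw [hf, Finset.mul_sum, ← Finset.sum_sub_distrib]
    exact Finset.sum_congr rfl fun i _ => by ring
  have hneg : ∑ i, b i * (e i - a) < 0 := by
    rw [map_smul, smul_eq_mul, inv_mul_lt_iff₀ hφ] at hfb
    rw [hlin]
    linarith
  -- `u = e - a` is the separating functional made homogeneous; `s = (1 + τ)⁻¹` turns the kernel of
  -- parameter `s` into `(1 + τ) λ / (τ + λ)`.
  refine hneg.not_ge (dual_nonneg hinj hpos hb fun τ hτ => ?_)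
  have hs : (1 + τ)⁻¹ ∈ Set.Icc (0 : ℝ) 1 := ⟨by positivity, inv_le_one_of_one_le₀ (by linarith)⟩
  have h1 := hfK _ (subset_convexHull ℝ K ⟨_, hs, rfl⟩)
  have hψ := hsum (arc_pos hpos hs)
  rw [map_smul, smul_eq_mul, lt_inv_mul_iff₀ hψ] at h1
  have h2 : 0 ≤ ∑ i, arc lam (1 + τ)⁻¹ i * (e i - a) := by rw [hlin]; linarith
  have h3 : ∑ i, arc lam (1 + τ)⁻¹ i * (e i - a) =
      (1 + τ) * ∑ i, (e i - a) * lam i / (τ + lam i) := by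
    rw [Finset.mul_sum]
    refine Finset.sum_congr rfl fun i _ => ?_
    have hd : 1 - (1 + τ)⁻¹ + (1 + τ)⁻¹ * lam i = (τ + lam i) / (1 + τ) := by
      field_simp
      ring
    rw [arc, hd, div_div_eq_mul_div]
    ring
  rw [h3] at h2
  exact nonneg_of_mul_nonneg_right h2 (by positivity)

end Sep

/-- Theorem 3.8, simple finite-dimensional Donoghue theorem:
for `A = diag(λ₁,…,λₙ)` with distinct positive eigenvalues,
`B = diag(h(λ₁),…,h(λₙ))` is an exact interpolation matrix for `A` iff `h`
agrees on the `λᵢ` with a function of class `P'`. -/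
theorem donoghue_simple_finite_dim (n : ℕ) (lam : Fin n → ℝ)
    (hpos : ∀ i, 0 < lam i) (hmono : StrictMono lam)
    (h : ℝ → ℝ) (hh : ∀ x : ℝ, 0 < x → 0 < h x) :
    (∀ T : Matrix (Fin n) (Fin n) ℂ,
        LoewnerLE (Tᴴ * T) 1 →
        LoewnerLE (Tᴴ * diagonal (fun i => (lam i : ℂ)) * T) (diagonal (fun i => (lam i : ℂ))) →
        LoewnerLE (Tᴴ * diagonal (fun i => (h (lam i) : ℂ)) * T)
          (diagonal (fun i => (h (lam i) : ℂ))))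
    ↔ ∃ c : ℝ, 0 ≤ c ∧ ∃ ρ : Measure ℝ, IsFiniteMeasure ρ ∧
        ∀ i, h (lam i) = c + ∫ t in Set.Ici (0 : ℝ), ((1 + t) * lam i) / (1 + t * lam i) ∂ρ := by
  simp only [loewnerLE_one_iff, loewnerLE_diagonal_iff lam,
    loewnerLE_diagonal_iff fun i => h (lam i)]
  constructor
  · intro hex
    exact mem_pickCone hmono.injective hpos (fun i => hh _ (hpos i)) hex
  · rintro ⟨c, hc, ρ, hρ, hb⟩
    exact isExact_of_pick hpos hc ρ hb
end
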